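/- arXiv:1606.03131 — 2 statements merged into one kernel-verified Lean document; each statement's English description precedes it below -/
import Mathlib

section
/- Let A(λ) = ∫_0^∞ {t}{λt}/t² dt for λ > 0. Then as λ → 0⁺, A(λ) = (λ/2) log(1/λ) + ((1 + A(1))/2) λ + O(λ²). -/
/-!
Rescaling the integral gives `A(λ) = λ A(1/λ)`, so it suffices to expand `A(c)` for large `c`.
Since `{t} = t` on `(0, 1)`,
`A(c) = ∫_0^c {t}/t dt + ∫_1^∞ {t}{ct}/t² dt`.
Write `{x} = 1/2 + ψ(x)` and let `P` be the periodic primitive of `ψ` that vanishes at the integers.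
In the first integral the mean `1/2` produces `(log c)/2`, and integrating `ψ` by parts leaves
`∫_1^∞ P(t)/t² dt` up to `O(1/c)`. In the second, the mean of `{ct}` leaves `½ ∫_1^∞ {t}/t² dt`,
and the remainder `∫_1^∞ {t} ψ(ct)/t² dt` is `O(1/c)`: on each `[n, n + 1]` the factor `{t}/t²` is
smooth and increasing from `0` to `1/(n + 1)²`, so one integration by parts against
`P(ct)/c` gains the factor `1/c` and the bounds are summable. The case `c = 1` of the
decomposition, together with `{t}² = 2 P(t) + {t}`, identifies the sum of the constants as
`(1 + A(1))/2`.
-/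

open MeasureTheory Filter Asymptotics

/-- `A(λ) = ∫_0^∞ {t}{λt}/t² dt`. -/
noncomputable def Afn (l : ℝ) : ℝ :=
  ∫ t in Set.Ioi (0:ℝ), Int.fract t * Int.fract (l * t) / t ^ 2

open Set
open scoped Topology Interval

theorem integrableOn_Ioi_sq_inv {a : ℝ} (ha : 0 < a) :
    IntegrableOn (fun t : ℝ => (t ^ 2)⁻¹) (Ioi a) :=
  (integrableOn_Ioi_rpow_of_lt (by norm_num : (-2 : ℝ) < -1) ha).congr_fun
    (fun t ht => by simp [Real.rpow_neg (ha.trans ht).le]) measurableSet_Ioi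

theorem integral_Ioi_sq_inv {a : ℝ} (ha : 0 < a) : ∫ t in Ioi a, (t ^ 2)⁻¹ = a⁻¹ := by
  calc ∫ t in Ioi a, (t ^ 2)⁻¹ = ∫ t in Ioi a, t ^ (-2 : ℝ) :=
        setIntegral_congr_fun measurableSet_Ioi fun t ht => by
          simp [Real.rpow_neg (ha.trans ht).le]
    _ = a⁻¹ := by
        rw [integral_Ioi_rpow_of_lt (by norm_num) ha]
        norm_num [Real.rpow_neg_one]

section DivSq

variable {f : ℝ → ℝ} {a C : ℝ}

theorem integrableOn_Ioi_div_sq (ha : 0 < a) (hf : AEStronglyMeasurable f (volume.restrict (Ioi a)))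
    (hC : ∀ t ∈ Ioi a, |f t| ≤ C) : IntegrableOn (fun t => f t / t ^ 2) (Ioi a) :=
  (integrableOn_Ioi_sq_inv ha).bdd_mul hf (ae_restrict_of_forall_mem measurableSet_Ioi hC)

theorem abs_integral_Ioi_div_sq_le (ha : 0 < a) (hC : ∀ t ∈ Ioi a, |f t| ≤ C) :
    |∫ t in Ioi a, f t / t ^ 2| ≤ C / a := by
  rw [div_eq_mul_inv, ← integral_Ioi_sq_inv ha, ← integral_const_mul]
  refine norm_integral_le_of_norm_le (f := fun t => f t / t ^ 2)
    ((integrableOn_Ioi_sq_inv ha).const_mul C)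
    (ae_restrict_of_forall_mem measurableSet_Ioi fun t ht => ?_)
  rw [Real.norm_eq_abs, abs_div, abs_of_nonneg (sq_nonneg t), div_eq_mul_inv]
  exact mul_le_mul_of_nonneg_right (hC t ht) (by positivity)

end DivSq

theorem norm_integral_Ioi_le_of_norm_integral_le_sub {E : Type*} [NormedAddCommGroup E]
    [NormedSpace ℝ E] {f : ℝ → E} {g : ℕ → ℝ} {L : ℝ} {m : ℕ} (hf : IntegrableOn f (Ioi m))
    (hfg : ∀ n ≥ m, ‖∫ t in (n : ℝ)..(n + 1 : ℕ), f t‖ ≤ g (n + 1) - g n)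
    (hg : Tendsto g atTop (𝓝 L)) : ‖∫ t in Ioi (m : ℝ), f t‖ ≤ L - g m := by
  refine le_of_tendsto_of_tendsto
    (intervalIntegral_tendsto_integral_Ioi _ hf tendsto_natCast_atTop_atTop).norm
    (hg.sub_const (g m)) ?_
  filter_upwards [eventually_ge_atTop m] with N hN
  have hint : ∀ n ∈ Ico m N, IntervalIntegrable f volume n (n + 1 : ℕ) := fun n hn =>
    (intervalIntegrable_iff_integrableOn_Ioc_of_le (by simp)).2
      (hf.mono_set fun t ht => (Nat.cast_le.2 hn.1).trans_lt ht.1)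
  calc ‖∫ t in (m : ℝ)..N, f t‖
      = ‖∑ n ∈ Finset.Ico m N, ∫ t in (n : ℝ)..(n + 1 : ℕ), f t‖ := by
        rw [intervalIntegral.sum_integral_adjacent_intervals_Ico hN hint]
    _ ≤ ∑ n ∈ Finset.Ico m N, (g (n + 1) - g n) :=
        norm_sum_le_of_le _ fun n hn => hfg n (Finset.mem_Ico.1 hn).1
    _ = g N - g m := Finset.sum_Ico_sub g hN

theorem fract_le_self {x : ℝ} (hx : 0 ≤ x) : Int.fract x ≤ x := by
  have : (0 : ℝ) ≤ ⌊x⌋ := by exact_mod_cast Int.floor_nonneg.2 hx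
  linarith [Int.self_sub_floor x]

theorem abs_fract_le_one (x : ℝ) : |Int.fract x| ≤ 1 := by
  rw [Int.abs_fract]
  exact (Int.fract_lt_one x).le

theorem fract_eq_sub_natCast {n : ℕ} {x : ℝ} (hx : x ∈ Ico (n : ℝ) (n + 1 : ℕ)) :
    Int.fract x = x - n :=
  Int.fract_eq_iff.2 ⟨sub_nonneg.2 hx.1, by simpa [sub_lt_iff_lt_add'] using hx.2, n, by simp⟩

theorem hasDerivAt_sub_div_sq (a : ℝ) {x : ℝ} (hx : x ≠ 0) :
    HasDerivAt (fun t : ℝ => (t - a) / t ^ 2) ((2 * a - x) / x ^ 3) x := by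
  refine (((hasDerivAt_id x).sub_const a).div (hasDerivAt_pow 2 x)
    (pow_ne_zero 2 hx)).congr_deriv ?_
  simp only [id]
  field_simp
  push_cast
  ring

/-- The sawtooth function `ψ(x) = {x} - 1/2`, the mean-zero part of `{x}`. -/
noncomputable def sawtooth (x : ℝ) : ℝ :=
  Int.fract x - 1 / 2

/-- The `1`-periodic primitive `P(x) = ({x}² - {x})/2` of `sawtooth`, normalized to vanish at the
integers. -/
noncomputable def sawtoothPrimitive (x : ℝ) : ℝ :=
  (Int.fract x ^ 2 - Int.fract x) / 2

theorem measurable_sawtooth : Measurable sawtooth :=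
  measurable_fract.sub_const _

theorem abs_sawtooth_le (x : ℝ) : |sawtooth x| ≤ 1 / 2 := by
  rw [sawtooth, abs_le]
  constructor <;> linarith [Int.fract_nonneg x, Int.fract_lt_one x]

theorem continuous_sawtoothPrimitive : Continuous sawtoothPrimitive := by
  have h : ContinuousOn (fun x : ℝ => (x ^ 2 - x) / 2) (Icc 0 1) := by fun_prop
  exact h.comp_fract'' (by norm_num)

theorem abs_sawtoothPrimitive_le (x : ℝ) : |sawtoothPrimitive x| ≤ 1 / 8 := by
  rw [sawtoothPrimitive, abs_le]
  constructor <;>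
    nlinarith [Int.fract_nonneg x, Int.fract_lt_one x, sq_nonneg (Int.fract x - 1 / 2)]

theorem hasDerivWithinAt_sawtoothPrimitive (x : ℝ) :
    HasDerivWithinAt sawtoothPrimitive (sawtooth x) (Ici x) x := by
  have hpoly : HasDerivAt (fun t : ℝ => ((t - ⌊x⌋) ^ 2 - (t - ⌊x⌋)) / 2) (sawtooth x) x := by
    have hid := (hasDerivAt_id x).sub_const (⌊x⌋ : ℝ)
    refine (((hid.pow 2).sub hid).div_const 2).congr_deriv ?_
    rw [sawtooth, ← Int.self_sub_floor]
    norm_num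
    ring
  have heq : ∀ t ∈ Ico x (⌊x⌋ + 1), sawtoothPrimitive t = ((t - ⌊x⌋) ^ 2 - (t - ⌊x⌋)) / 2 :=
    fun t ht => by
      have : ⌊t⌋ = ⌊x⌋ := Int.floor_eq_iff.2 ⟨(Int.floor_le x).trans ht.1, ht.2⟩
      rw [sawtoothPrimitive, ← Int.self_sub_floor, this]
  have hx : x < ⌊x⌋ + 1 := Int.lt_floor_add_one x
  exact hpoly.hasDerivWithinAt.congr_of_eventuallyEq
    (eventually_of_mem (Ico_mem_nhdsGE hx) heq) (heq x ⟨le_rfl, hx⟩)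

section Oscillation

variable {c a b : ℝ} {u u' : ℝ → ℝ}

theorem hasDerivWithinAt_sawtoothPrimitive_mul_div (hc : 0 < c) (x : ℝ) :
    HasDerivWithinAt (fun s => sawtoothPrimitive (c * s) / c) (sawtooth (c * x)) (Ioi x) x := by
  have hmul : HasDerivWithinAt (fun s => c * s) c (Ioi x) x := by
    simpa using ((hasDerivAt_id x).const_mul c).hasDerivWithinAt
  have hcomp := (hasDerivWithinAt_sawtoothPrimitive (c * x)).comp x hmul
    fun s hs => mul_le_mul_of_nonneg_left (mem_Ioi.1 hs).le hc.le
  simpa only [Function.comp_def, mul_div_cancel_right₀ _ hc.ne'] using hcomp.div_const c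

theorem abs_sawtoothPrimitive_mul_div_le (hc : 0 < c) (x : ℝ) :
    |sawtoothPrimitive (c * x) / c| ≤ 1 / (8 * c) := by
  rw [abs_div, abs_of_pos hc, ← div_div]
  exact div_le_div_of_nonneg_right (abs_sawtoothPrimitive_le _) hc.le

theorem intervalIntegrable_sawtooth_mul (c a b : ℝ) :
    IntervalIntegrable (fun s => sawtooth (c * s)) volume a b :=
  (intervalIntegrable_const (c := (1 / 2 : ℝ))).mono_fun'
    (measurable_sawtooth.comp (measurable_const_mul c)).aestronglyMeasurable
    (ae_of_all _ fun s => abs_sawtooth_le (c * s))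

theorem integral_mul_sawtooth_mul (hc : 0 < c) (hu : ContinuousOn u [[a, b]])
    (huu' : ∀ x ∈ Ioo (min a b) (max a b), HasDerivAt u (u' x) x)
    (hu' : IntervalIntegrable u' volume a b) :
    ∫ s in a..b, u s * sawtooth (c * s) =
      u b * (sawtoothPrimitive (c * b) / c) - u a * (sawtoothPrimitive (c * a) / c) -
        ∫ s in a..b, u' s * (sawtoothPrimitive (c * s) / c) :=
  intervalIntegral.integral_mul_deriv_eq_deriv_mul_of_hasDeriv_right hu
    ((continuous_sawtoothPrimitive.comp (continuous_const_mul c)).div_const c).continuousOn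
    (fun x hx => (huu' x hx).hasDerivWithinAt)
    (fun x _ => hasDerivWithinAt_sawtoothPrimitive_mul_div hc x) hu'
    (intervalIntegrable_sawtooth_mul c a b)

theorem abs_integral_mul_sawtooth_mul_le (hc : 0 < c) (hab : a ≤ b) (hu : ContinuousOn u (Icc a b))
    (huu' : ∀ x ∈ Ioo a b, HasDerivAt u (u' x) x) (hu' : IntervalIntegrable u' volume a b) :
    |∫ s in a..b, u s * sawtooth (c * s)| ≤
      (|u b| + |u a| + ∫ s in a..b, |u' s|) * (1 / (8 * c)) := by
  have hP := abs_sawtoothPrimitive_mul_div_le hc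
  have hint : |∫ s in a..b, u' s * (sawtoothPrimitive (c * s) / c)| ≤
      (∫ s in a..b, |u' s|) * (1 / (8 * c)) := by
    rw [← intervalIntegral.integral_mul_const]
    refine intervalIntegral.norm_integral_le_of_norm_le
      (f := fun s => u' s * (sawtoothPrimitive (c * s) / c)) hab (ae_of_all _ fun s _ => ?_)
      (hu'.abs.mul_const _)
    rw [norm_mul, Real.norm_eq_abs]
    exact mul_le_mul_of_nonneg_left (hP s) (abs_nonneg _)
  rw [integral_mul_sawtooth_mul hc (by rwa [uIcc_of_le hab])
    (by rwa [min_eq_left hab, max_eq_right hab]) hu']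
  refine (abs_sub _ _).trans ((add_le_add_left (abs_sub _ _) _).trans ?_)
  rw [abs_mul, abs_mul, add_mul, add_mul]
  gcongr <;> exact hP _

theorem abs_integral_mul_sawtooth_mul_le_of_deriv_nonneg (hc : 0 < c) (hab : a ≤ b)
    (hu : ContinuousOn u (Icc a b)) (huu' : ∀ x ∈ Ioo a b, HasDerivAt u (u' x) x)
    (hu' : ∀ x ∈ Ioo a b, 0 ≤ u' x) (ha : 0 ≤ u a) :
    |∫ s in a..b, u s * sawtooth (c * s)| ≤ u b / (4 * c) := by
  have hint : IntervalIntegrable u' volume a b :=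
    intervalIntegral.intervalIntegrable_deriv_of_nonneg (by rwa [uIcc_of_le hab])
      (by rwa [min_eq_left hab, max_eq_right hab]) (by rwa [min_eq_left hab, max_eq_right hab])
  have hvar : ∫ s in a..b, |u' s| = u b - u a := by
    rw [← intervalIntegral.integral_eq_sub_of_hasDerivAt_of_le hab hu huu' hint]
    exact intervalIntegral.integral_congr_Ioo_of_le hab fun s hs => abs_of_nonneg (hu' s hs)
  have hb : 0 ≤ u b := by
    have : 0 ≤ ∫ s in a..b, |u' s| :=
      intervalIntegral.integral_nonneg hab fun s _ => abs_nonneg _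
    linarith
  refine (abs_integral_mul_sawtooth_mul_le hc hab hu huu' hint).trans_eq ?_
  rw [hvar, abs_of_nonneg ha, abs_of_nonneg hb]
  field_simp
  ring

end Oscillation

theorem integrableOn_Ioi_fract_mul_sawtooth_mul_div_sq (c : ℝ) {a : ℝ} (ha : 0 < a) :
    IntegrableOn (fun t => Int.fract t * sawtooth (c * t) / t ^ 2) (Ioi a) := by
  refine integrableOn_Ioi_div_sq ha (measurable_fract.mul
    (measurable_sawtooth.comp (measurable_const_mul c))).aestronglyMeasurable
    (C := 1 * (1 / 2)) fun t _ => ?_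
  rw [abs_mul]
  exact mul_le_mul (abs_fract_le_one t) (abs_sawtooth_le _) (abs_nonneg _) zero_le_one

theorem abs_integral_fract_mul_sawtooth_mul_div_sq_le {c : ℝ} (hc : 0 < c) {n : ℕ}
    (hn : 1 ≤ n) :
    |∫ t in (n : ℝ)..(n + 1 : ℕ), Int.fract t * sawtooth (c * t) / t ^ 2| ≤
      1 / (n + 1 : ℕ) ^ 2 / (4 * c) := by
  have hn' : (1 : ℝ) ≤ n := by exact_mod_cast hn
  have hle : (n : ℝ) ≤ (n + 1 : ℕ) := by simp
  have hpos : ∀ t ∈ Icc (n : ℝ) (n + 1 : ℕ), 0 < t := fun t ht => by linarith [ht.1]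
  have hderiv : ∀ t ∈ Ioo (n : ℝ) (n + 1 : ℕ),
      HasDerivAt (fun t : ℝ => (t - n) / t ^ 2) ((2 * n - t) / t ^ 3) t := fun t ht =>
    hasDerivAt_sub_div_sq n (hpos t (Ioo_subset_Icc_self ht)).ne'
  have hderiv_nonneg : ∀ t ∈ Ioo (n : ℝ) (n + 1 : ℕ), 0 ≤ (2 * n - t) / t ^ 3 := fun t ht => by
    have ht' := ht.2
    push_cast at ht'
    exact div_nonneg (by linarith) (pow_pos (hpos t (Ioo_subset_Icc_self ht)) 3).le
  have hcont : ContinuousOn (fun t : ℝ => (t - n) / t ^ 2) (Icc n (n + 1 : ℕ)) :=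
    ContinuousOn.div (by fun_prop) (by fun_prop) fun t ht => pow_ne_zero 2 (hpos t ht).ne'
  calc |∫ t in (n : ℝ)..(n + 1 : ℕ), Int.fract t * sawtooth (c * t) / t ^ 2|
      = |∫ t in (n : ℝ)..(n + 1 : ℕ), (t - n) / t ^ 2 * sawtooth (c * t)| := by
        congr 1
        refine intervalIntegral.integral_congr_Ioo_of_le hle fun t ht => ?_
        simp only [fract_eq_sub_natCast (Ioo_subset_Ico_self ht), mul_div_right_comm]
    _ ≤ ((n + 1 : ℕ) - n) / (n + 1 : ℕ) ^ 2 / (4 * c) :=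
        abs_integral_mul_sawtooth_mul_le_of_deriv_nonneg hc hle hcont hderiv hderiv_nonneg
          (by simp)
    _ = 1 / (n + 1 : ℕ) ^ 2 / (4 * c) := by simp

theorem abs_integral_Ioi_fract_mul_sawtooth_mul_div_sq_le {c : ℝ} (hc : 0 < c) :
    |∫ t in Ioi (1 : ℝ), Int.fract t * sawtooth (c * t) / t ^ 2| ≤ 1 / (4 * c) := by
  have hlim : Tendsto (fun n : ℕ => -(1 / (n : ℝ) / (4 * c))) atTop (𝓝 0) := by
    simpa using (tendsto_one_div_atTop_nhds_zero_nat.div_const (4 * c)).neg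
  have hstep : ∀ n : ℕ, 1 ≤ n →
      |∫ t in (n : ℝ)..(n + 1 : ℕ), Int.fract t * sawtooth (c * t) / t ^ 2| ≤
        -(1 / (n + 1 : ℕ) / (4 * c)) - -(1 / (n : ℝ) / (4 * c)) := fun n hn => by
    refine (abs_integral_fract_mul_sawtooth_mul_div_sq_le hc hn).trans ?_
    have hn' : (0 : ℝ) < n := by exact_mod_cast hn
    rw [neg_sub_neg, ← sub_div]
    refine div_le_div_of_nonneg_right ?_ (by positivity)
    push_cast
    rw [div_sub_div _ _ hn'.ne' (by positivity), div_le_div_iff₀ (by positivity) (by positivity)]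
    nlinarith
  simpa using norm_integral_Ioi_le_of_norm_integral_le_sub
    (integrableOn_Ioi_fract_mul_sawtooth_mul_div_sq c (by simp)) hstep hlim

theorem integrableOn_Ioi_fract_div_sq {a : ℝ} (ha : 0 < a) :
    IntegrableOn (fun t : ℝ => Int.fract t / t ^ 2) (Ioi a) :=
  integrableOn_Ioi_div_sq ha measurable_fract.aestronglyMeasurable fun t _ => abs_fract_le_one t

theorem integrableOn_Ioi_sawtoothPrimitive_div_sq {a : ℝ} (ha : 0 < a) :
    IntegrableOn (fun t => sawtoothPrimitive t / t ^ 2) (Ioi a) :=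
  integrableOn_Ioi_div_sq ha continuous_sawtoothPrimitive.aestronglyMeasurable
    fun t _ => abs_sawtoothPrimitive_le t

theorem intervalIntegrable_fract_div {a b : ℝ} (ha : 0 ≤ a) (hb : 0 ≤ b) :
    IntervalIntegrable (fun t => Int.fract t / t) volume a b := by
  refine (intervalIntegrable_const (c := (1 : ℝ))).mono_fun'
    (measurable_fract.div measurable_id).aestronglyMeasurable
    (ae_restrict_of_forall_mem measurableSet_uIoc fun t ht => ?_)
  have ht0 : 0 < t := (le_min ha hb).trans_lt ht.1
  simp only [Real.norm_eq_abs, abs_div, Int.abs_fract, abs_of_pos ht0]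
  exact div_le_one_of_le₀ (fract_le_self ht0.le) ht0.le

theorem integral_zero_one_fract_div : ∫ t in (0 : ℝ)..1, Int.fract t / t = 1 := by
  calc ∫ t in (0 : ℝ)..1, Int.fract t / t = ∫ _ in (0 : ℝ)..1, (1 : ℝ) :=
        intervalIntegral.integral_congr_Ioo_of_le zero_le_one fun t ht => by
          simp only [Int.fract_eq_self.2 ⟨ht.1.le, ht.2⟩, div_self ht.1.ne']
    _ = 1 := by simp

theorem integral_one_fract_div {c : ℝ} (hc : 0 < c) :
    ∫ t in (1 : ℝ)..c, Int.fract t / t =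
      Real.log c / 2 + sawtoothPrimitive c / c +
        ∫ t in (1 : ℝ)..c, sawtoothPrimitive t / t ^ 2 := by
  have hne : ∀ t ∈ [[1, c]], t ≠ 0 := fun t ht => ((lt_min one_pos hc).trans_le ht.1).ne'
  have hinv : ContinuousOn (fun t : ℝ => t⁻¹) [[1, c]] := continuousOn_inv₀.mono hne
  have hosc : ∫ t in (1 : ℝ)..c, t⁻¹ * sawtooth t =
      sawtoothPrimitive c / c + ∫ t in (1 : ℝ)..c, sawtoothPrimitive t / t ^ 2 := by
    have hparts := integral_mul_sawtooth_mul one_pos hinv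
      (fun t ht => hasDerivAt_inv (hne t (Ioo_subset_Icc_self ht)))
      ((continuousOn_pow 2).inv₀ fun t ht => pow_ne_zero 2 (hne t ht)).neg.intervalIntegrable
    have hone : sawtoothPrimitive 1 = 0 := by simp [sawtoothPrimitive]
    simpa only [one_mul, div_one, hone, mul_zero, sub_zero, neg_mul, inv_mul_eq_div,
      intervalIntegral.integral_neg, sub_neg_eq_add] using hparts
  have hlog : ∫ t in (1 : ℝ)..c, t⁻¹ * (1 / 2) = Real.log c / 2 := by
    rw [intervalIntegral.integral_mul_const, integral_inv_of_pos one_pos hc, div_one, mul_one_div]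
  have hsaw : IntervalIntegrable sawtooth volume 1 c := by
    simpa only [one_mul] using intervalIntegrable_sawtooth_mul 1 1 c
  calc ∫ t in (1 : ℝ)..c, Int.fract t / t
      = ∫ t in (1 : ℝ)..c, (t⁻¹ * (1 / 2) + t⁻¹ * sawtooth t) := by
        simp only [← mul_add, sawtooth, add_sub_cancel]
        simp only [inv_mul_eq_div]
    _ = _ := by
        rw [intervalIntegral.integral_add (hinv.intervalIntegrable.mul_const _)
          (hsaw.continuousOn_mul hinv), hlog, hosc, add_assoc]

theorem integral_zero_fract_div {c : ℝ} (hc : 0 < c) :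
    ∫ t in (0 : ℝ)..c, Int.fract t / t =
      1 + Real.log c / 2 + sawtoothPrimitive c / c +
        ((∫ t in Ioi (1 : ℝ), sawtoothPrimitive t / t ^ 2) -
          ∫ t in Ioi c, sawtoothPrimitive t / t ^ 2) := by
  rw [← intervalIntegral.integral_add_adjacent_intervals
      (intervalIntegrable_fract_div le_rfl zero_le_one)
      (intervalIntegrable_fract_div zero_le_one hc.le),
    integral_zero_one_fract_div, integral_one_fract_div hc,
    ← intervalIntegral.integral_interval_add_Ioi
      (integrableOn_Ioi_sawtoothPrimitive_div_sq one_pos)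
      (integrableOn_Ioi_sawtoothPrimitive_div_sq hc)]
  ring

theorem integral_Ioi_fract_mul_fract_mul_div_sq (c : ℝ) :
    ∫ t in Ioi (1 : ℝ), Int.fract t * Int.fract (c * t) / t ^ 2 =
      (∫ t in Ioi (1 : ℝ), Int.fract t / t ^ 2) / 2 +
        ∫ t in Ioi (1 : ℝ), Int.fract t * sawtooth (c * t) / t ^ 2 := by
  rw [← integral_div, ← integral_add ((integrableOn_Ioi_fract_div_sq one_pos).div_const 2)
    (integrableOn_Ioi_fract_mul_sawtooth_mul_div_sq c one_pos)]
  congr 1 with t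
  rw [sawtooth]
  ring

theorem Afn_eq_mul_Afn_inv {l : ℝ} (hl : 0 < l) : Afn l = l * Afn l⁻¹ := by
  have hscale := integral_comp_mul_left_Ioi'
    (fun t => Int.fract t * Int.fract (l⁻¹ * t) / t ^ 2) 0 hl
  rw [mul_zero] at hscale
  rw [Afn, Afn, ← hscale, smul_eq_mul, ← integral_const_mul, ← integral_const_mul]
  congr 1 with t
  rw [inv_mul_cancel_left₀ hl.ne', mul_pow]
  field_simp

theorem Afn_eq_integral_fract_div_add {c : ℝ} (hc : 0 < c) :
    Afn c = (∫ t in (0 : ℝ)..c, Int.fract t / t) +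
      ∫ t in Ioi (1 : ℝ), Int.fract t * Int.fract (c * t) / t ^ 2 := by
  have hunit : EqOn (fun t => c * (Int.fract (c * t) / (c * t)))
      (fun t => Int.fract t * Int.fract (c * t) / t ^ 2) (uIoo 0 1) := fun t ht => by
    rw [uIoo_of_le zero_le_one] at ht
    have ht0 := ht.1.ne'
    simp only [Int.fract_eq_self.2 ⟨ht.1.le, ht.2⟩]
    field_simp
  have hzero_one : IntervalIntegrable (fun t => c * (Int.fract (c * t) / (c * t))) volume 0 1 := by
    simpa [hc.ne'] using
      ((intervalIntegrable_fract_div le_rfl hc.le).comp_mul_left (c := c)).const_mul c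
  have htail : IntegrableOn (fun t => Int.fract t * Int.fract (c * t) / t ^ 2) (Ioi 1) := by
    refine integrableOn_Ioi_div_sq one_pos (C := 1) (measurable_fract.mul
      (measurable_fract.comp (measurable_const_mul c))).aestronglyMeasurable fun t _ => ?_
    rw [abs_mul]
    exact mul_le_one₀ (abs_fract_le_one _) (abs_nonneg _) (abs_fract_le_one _)
  rw [Afn, ← intervalIntegral.integral_interval_add_Ioi' (hzero_one.congr_uIoo hunit) htail,
    ← intervalIntegral.integral_congr_uIoo hunit, intervalIntegral.integral_const_mul,
    intervalIntegral.mul_integral_comp_mul_left (f := fun t => Int.fract t / t), mul_zero, mul_one]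

theorem Afn_one :
    Afn 1 = 1 + 2 * (∫ t in Ioi (1 : ℝ), sawtoothPrimitive t / t ^ 2) +
      ∫ t in Ioi (1 : ℝ), Int.fract t / t ^ 2 := by
  rw [Afn_eq_integral_fract_div_add one_pos, integral_zero_one_fract_div, add_assoc,
    ← integral_const_mul, ← integral_add
      ((integrableOn_Ioi_sawtoothPrimitive_div_sq one_pos).const_mul 2)
      (integrableOn_Ioi_fract_div_sq one_pos)]
  congr 2 with t
  rw [sawtoothPrimitive, one_mul]
  ring

theorem Afn_sub_log_eq {c : ℝ} (hc : 0 < c) :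
    Afn c - (Real.log c / 2 + (1 + Afn 1) / 2) =
      sawtoothPrimitive c / c - (∫ t in Ioi c, sawtoothPrimitive t / t ^ 2) +
        ∫ t in Ioi (1 : ℝ), Int.fract t * sawtooth (c * t) / t ^ 2 := by
  rw [Afn_eq_integral_fract_div_add hc, integral_zero_fract_div hc,
    integral_Ioi_fract_mul_fract_mul_div_sq, Afn_one]
  ring

theorem abs_Afn_sub_log_le {c : ℝ} (hc : 0 < c) :
    |Afn c - (Real.log c / 2 + (1 + Afn 1) / 2)| ≤ 1 / (2 * c) := by
  have hend : |sawtoothPrimitive c / c| ≤ 1 / 8 / c := by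
    rw [abs_div, abs_of_pos hc]
    exact div_le_div_of_nonneg_right (abs_sawtoothPrimitive_le c) hc.le
  have htail := abs_integral_Ioi_div_sq_le hc fun t _ => abs_sawtoothPrimitive_le t
  have hosc := abs_integral_Ioi_fract_mul_sawtooth_mul_div_sq_le hc
  rw [Afn_sub_log_eq hc]
  calc _ ≤ 1 / 8 / c + 1 / 8 / c + 1 / (4 * c) :=
        (abs_add_le _ _).trans (add_le_add ((abs_sub _ _).trans (add_le_add hend htail)) hosc)
    _ = 1 / (2 * c) := by
        field_simp
        norm_num

theorem Afn_asymptotic_general {l : ℝ} (hl : 0 < l) :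
    |Afn l - (l / 2 * Real.log (1 / l) + (1 + Afn 1) / 2 * l)| ≤ l ^ 2 / 2 := by
  calc |Afn l - (l / 2 * Real.log (1 / l) + (1 + Afn 1) / 2 * l)|
      = l * |Afn l⁻¹ - (Real.log l⁻¹ / 2 + (1 + Afn 1) / 2)| := by
        rw [Afn_eq_mul_Afn_inv hl, one_div, ← abs_of_pos hl, ← abs_mul, abs_of_pos hl]
        ring_nf
    _ ≤ l * (1 / (2 * l⁻¹)) :=
        mul_le_mul_of_nonneg_left (abs_Afn_sub_log_le (inv_pos.2 hl)) hl.le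
    _ = l ^ 2 / 2 := by field_simp

/-- As `λ → 0⁺`, `A(λ) = (λ/2) log(1/λ) + ((1+A(1))/2) λ + O(λ²)`. -/
theorem Afn_asymptotic :
    (fun l : ℝ => Afn l - (l / 2 * Real.log (1 / l) + (1 + Afn 1) / 2 * l))
      =O[nhdsWithin 0 (Set.Ioi (0:ℝ))] (fun l : ℝ => l ^ 2) := by
  refine IsBigO.of_bound (1 / 2) (eventually_mem_nhdsWithin.mono fun l hl => ?_)
  simpa [div_eq_inv_mul] using Afn_asymptotic_general hl
end

section
/- Let g(x) = Σ_{l≥1}(1 − 2{lx})/l and A = ∫_0^∞ {t}²/t² dt. There is an absolute constant C > 0 such that ∫_0^1 |g(x)|^K dx = 2 e^{−A} Γ(K+1) (1 + O(exp(−C K))) as K → ∞ through the natural numbers. -/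
open MeasureTheory Filter

/-- `A = ∫_0^∞ {t}²/t² dt`. -/
noncomputable def Aconst : ℝ := ∫ t in Set.Ioi (0:ℝ), Int.fract t ^ 2 / t ^ 2

/-!
Write `S_N` for the `N`-th partial sum of the series and `T` for the Gauss map. Counting the lattice
points under the line of slope `x` by columns and by rows gives the approximate functional equation
`S_N x + x * S_⌊Nx⌋ (T x) = -log x - A + O(1/⌊Nx⌋ + x)`. Iterated, it dominates `|S_N|` by truncated
Brjuno series. The exponential moments of order `s < 1` of these are bounded: the transfer operator
of `T` with weight `x^(-s)` is bounded on `L¹` because the branches of `T` contribute `k^(s-2)`, and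
`x * T x ≤ 1/2` halves the exponent every two steps, so that AM-GM closes the recursion. By Fatou
the moments of `g` are finite, and in the limit `|g x + log x + A| ≤ x (14 + |g (T x)|)` almost
everywhere. On `(0, 1/2)` this compares `|g|^K` with `|log x + A|^K`, whose integral is `e^(-A) K!`,
with error `O(K! μ^(-K))` for any `μ < 2`; the antisymmetry `g (1 - x) = -g x` doubles the result.
-/

section Harmonic

open Real

lemma log_one_add_inv_le_trapezoid {a : ℝ} (ha : 0 < a) :
    log (1 + a⁻¹) ≤ (a⁻¹ + (a + 1)⁻¹) / 2 := by
  have hlog : 0 ≤ log (1 + a⁻¹) := log_nonneg (by linarith [inv_pos.2 ha])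
  calc log (1 + a⁻¹) ≤ sinh (log (1 + a⁻¹)) := self_le_sinh_iff.2 hlog
    _ = (a⁻¹ + (a + 1)⁻¹) / 2 := by
      rw [sinh_log (by positivity)]
      field_simp
      ring

lemma trapezoid_sub_log_one_add_inv_le {a : ℝ} (ha : 0 < a) :
    (a⁻¹ + (a + 1)⁻¹) / 2 - log (1 + a⁻¹) ≤ ((a ^ 2)⁻¹ - ((a + 1) ^ 2)⁻¹) / 8 := by
  have hlog : 2 / (2 * a + 1) ≤ log (1 + a⁻¹) := by
    refine le_trans (le_of_eq ?_) (le_log_one_add_of_nonneg (inv_pos.2 ha).le)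
    field_simp
    ring
  have hrat : ((a ^ 2)⁻¹ - ((a + 1) ^ 2)⁻¹) / 8 - ((a⁻¹ + (a + 1)⁻¹) / 2 - 2 / (2 * a + 1)) =
      1 / (8 * a ^ 2 * (a + 1) ^ 2 * (2 * a + 1)) := by
    field_simp
    ring
  have : 0 < 1 / (8 * a ^ 2 * (a + 1) ^ 2 * (2 * a + 1)) := by positivity
  linarith

/-- The Euler–Maclaurin approximant `H_n - log n - 1/(2n)` of `γ`, which increases to `γ` with
error at most `1/(8n²)`. -/
noncomputable def gammaApprox (n : ℕ) : ℝ := harmonic n - log n - (n : ℝ)⁻¹ / 2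

lemma gammaApprox_succ_sub {n : ℕ} (hn : 0 < n) :
    gammaApprox (n + 1) - gammaApprox n =
      ((n : ℝ)⁻¹ + ((n : ℝ) + 1)⁻¹) / 2 - log (1 + (n : ℝ)⁻¹) := by
  have hn' : (0 : ℝ) < n := Nat.cast_pos.2 hn
  have hlog : log ((n : ℝ) + 1) = log n + log (1 + (n : ℝ)⁻¹) := by
    rw [← log_mul hn'.ne' (by positivity)]
    congr 1
    field_simp
  simp only [gammaApprox, harmonic_succ, Rat.cast_add, Rat.cast_inv, Rat.cast_natCast,
    Nat.cast_add, Nat.cast_one, hlog]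
  ring

lemma tendsto_gammaApprox : Tendsto gammaApprox atTop (nhds eulerMascheroniConstant) := by
  have h := tendsto_harmonic_sub_log.sub ((tendsto_inv_atTop_nhds_zero_nat (𝕜 := ℝ)).div_const 2)
  rwa [zero_div, sub_zero] at h

lemma gammaApprox_le {n : ℕ} (hn : 0 < n) : gammaApprox n ≤ eulerMascheroniConstant := by
  have hmono : Monotone fun k => gammaApprox (k + 1) := monotone_nat_of_le_succ fun k => by
    have := gammaApprox_succ_sub k.succ_pos
    have := log_one_add_inv_le_trapezoid (a := (k + 1 : ℕ)) (by positivity)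
    linarith
  simpa [Nat.sub_add_cancel hn] using
    hmono.ge_of_tendsto ((tendsto_add_atTop_iff_nat 1).2 tendsto_gammaApprox) (n - 1)

lemma le_gammaApprox_add {n : ℕ} (hn : 0 < n) :
    eulerMascheroniConstant ≤ gammaApprox n + ((n : ℝ) ^ 2)⁻¹ / 8 := by
  have hanti : Antitone fun k => gammaApprox (k + 1) + (((k + 1 : ℕ) : ℝ) ^ 2)⁻¹ / 8 :=
    antitone_nat_of_succ_le fun k => by
      have := gammaApprox_succ_sub k.succ_pos
      have := trapezoid_sub_log_one_add_inv_le (a := (k + 1 : ℕ)) (by positivity)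
      push_cast at *
      linarith
  have hzero : Tendsto (fun n : ℕ => ((n : ℝ) ^ 2)⁻¹ / 8) atTop (nhds 0) := by
    simpa using ((tendsto_inv_atTop_nhds_zero_nat (𝕜 := ℝ)).pow 2).div_const 8
  have hlim : Tendsto (fun n : ℕ => gammaApprox n + ((n : ℝ) ^ 2)⁻¹ / 8) atTop
      (nhds eulerMascheroniConstant) := by
    simpa only [add_zero] using tendsto_gammaApprox.add hzero
  have := hanti.le_of_tendsto ((tendsto_add_atTop_iff_nat 1).2 hlim) (n - 1)
  rwa [Nat.sub_add_cancel hn] at this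

lemma abs_harmonic_sub_log_sub_gamma_le {n : ℕ} (hn : 0 < n) :
    |harmonic n - log n - eulerMascheroniConstant| ≤ (n : ℝ)⁻¹ := by
  have hn' : (1 : ℝ) ≤ n := Nat.one_le_cast.2 hn
  have hsq : ((n : ℝ) ^ 2)⁻¹ ≤ (n : ℝ)⁻¹ := inv_anti₀ (by positivity) (by nlinarith)
  have hlow := gammaApprox_le hn
  have hupp := le_gammaApprox_add hn
  rw [gammaApprox] at hlow hupp
  rw [abs_le]
  constructor <;> linarith [inv_nonneg.2 (n.cast_nonneg : (0 : ℝ) ≤ n)]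

lemma log_sub_log_le {a b : ℝ} (ha : 0 < a) (hb : 0 < b) : log b - log a ≤ (b - a) / a := by
  rw [← log_div hb.ne' ha.ne', sub_div, div_self ha.ne']
  exact log_le_sub_one_of_pos (div_pos hb ha)

lemma abs_log_sub_log_sub_le {n y : ℝ} (hn : 1 ≤ n) (hny : n ≤ y) (hyn : y ≤ n + 1) :
    |log y - log n - (y - n) / y| ≤ 2 / y ^ 2 := by
  have hy : 0 < y := by linarith
  have hupp := log_sub_log_le (show 0 < n by linarith) hy
  have hlow := log_sub_log_le hy (show 0 < n by linarith)
  have hgap : (y - n) / n - (y - n) / y = (y - n) ^ 2 / (n * y) := by field_simp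
  have hbound : (y - n) ^ 2 / (n * y) ≤ 2 / y ^ 2 := by
    rw [div_le_div_iff₀ (by positivity) (by positivity)]
    have hsq : (y - n) ^ 2 ≤ 1 := by nlinarith
    nlinarith [mul_le_mul_of_nonneg_right hsq (sq_nonneg y)]
  rw [← neg_sub y n, neg_div] at hlow
  rw [abs_of_nonneg] <;> linarith

lemma abs_harmonic_floor_sub_le {y : ℝ} (hy : 1 ≤ y) :
    |harmonic ⌊y⌋₊ - log y - eulerMascheroniConstant - (1 - 2 * Int.fract y) / (2 * y)| ≤
      3 / y ^ 2 := by
  have hfl : 0 < ⌊y⌋₊ := Nat.floor_pos.2 hy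
  have hfract : Int.fract y = y - ⌊y⌋₊ := by
    rw [Int.fract, natCast_floor_eq_intCast_floor (by linarith)]
  have hn : (1 : ℝ) ≤ ⌊y⌋₊ := Nat.one_le_cast.2 hfl
  have hny := Nat.floor_le (show 0 ≤ y by linarith)
  have hyn := (Nat.lt_floor_add_one y).le
  have hlow := gammaApprox_le hfl
  have hupp := le_gammaApprox_add hfl
  rw [gammaApprox] at hlow hupp
  rw [hfract]
  generalize (⌊y⌋₊ : ℝ) = n at *
  have hlog := abs_le.1 (abs_log_sub_log_sub_le hn hny hyn)
  have hinv : n⁻¹ / 2 - (1 - 2 * (y - n)) / (2 * y) - (y - n) / y = (y - n) / (2 * (n * y)) := by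
    field_simp
    ring
  have hinv_nonneg : 0 ≤ (y - n) / (2 * (n * y)) := div_nonneg (by linarith) (by positivity)
  have hinv_le : (y - n) / (2 * (n * y)) ≤ 1 / y ^ 2 := by
    rw [div_le_div_iff₀ (by positivity) (by positivity)]
    nlinarith
  have hsq : (n ^ 2)⁻¹ / 8 ≤ 1 / y ^ 2 := by
    rw [inv_eq_one_div, div_div, div_le_div_iff₀ (by positivity) (by positivity)]
    nlinarith
  have htotal : 3 / y ^ 2 = 2 / y ^ 2 + 1 / y ^ 2 := by ring
  rw [abs_le]
  constructor <;> linarith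

end Harmonic

section Aconst

open Real

lemma fract_sq_div_sq_le_one {t : ℝ} (ht : 0 ≤ t) : Int.fract t ^ 2 / t ^ 2 ≤ 1 := by
  refine div_le_one_of_le₀ (pow_le_pow_left₀ (Int.fract_nonneg t) ?_ 2) (sq_nonneg t)
  have : (0 : ℝ) ≤ ⌊t⌋ := Int.cast_nonneg (Int.floor_nonneg.2 ht)
  linarith [Int.self_sub_floor t]

lemma fract_sq_div_sq_le_rpow (t : ℝ) : Int.fract t ^ 2 / t ^ 2 ≤ t ^ (-2 : ℝ) := by
  have hrpow : t ^ (-2 : ℝ) = 1 / t ^ 2 := by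
    rw [one_div]
    exact_mod_cast rpow_intCast t (-2)
  rw [hrpow]
  gcongr
  exact pow_le_one₀ (Int.fract_nonneg t) (Int.fract_lt_one t).le

lemma integrableOn_fract_sq_div_sq_Ioi {a : ℝ} (ha : 0 < a) :
    IntegrableOn (fun t : ℝ => Int.fract t ^ 2 / t ^ 2) (Set.Ioi a) := by
  refine Integrable.mono' (integrableOn_Ioi_rpow_of_lt (by norm_num : (-2 : ℝ) < -1) ha)
    (by fun_prop : Measurable _).aestronglyMeasurable (Eventually.of_forall fun t => ?_)
  rw [norm_of_nonneg (by positivity)]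
  exact fract_sq_div_sq_le_rpow t

lemma integrableOn_fract_sq_div_sq :
    IntegrableOn (fun t : ℝ => Int.fract t ^ 2 / t ^ 2) (Set.Ioi 0) := by
  rw [← Set.Ioc_union_Ioi_eq_Ioi zero_le_one]
  refine IntegrableOn.union ?_ (integrableOn_fract_sq_div_sq_Ioi one_pos)
  refine Integrable.mono' (g := fun _ => 1) (by simp)
    (by fun_prop : Measurable _).aestronglyMeasurable ?_
  filter_upwards [ae_restrict_mem measurableSet_Ioc] with t ht
  rw [norm_of_nonneg (by positivity)]
  exact fract_sq_div_sq_le_one ht.1.le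

lemma integral_sub_sq_div_sq {a b : ℝ} (ha : 0 < a) (hb : 0 < b) :
    ∫ t in a..b, (t - a) ^ 2 / t ^ 2 = b - a ^ 2 / b - 2 * a * (log b - log a) := by
  have hne : ∀ t ∈ Set.uIcc a b, t ≠ 0 := fun t ht => ((lt_inf_iff.2 ⟨ha, hb⟩).trans_le ht.1).ne'
  have hderiv : ∀ t ∈ Set.uIcc a b,
      HasDerivAt (fun t => t - 2 * a * log t - a ^ 2 * t⁻¹) ((t - a) ^ 2 / t ^ 2) t := by
    intro t ht
    have ht0 := hne t ht
    refine (((hasDerivAt_id t).sub ((hasDerivAt_log ht0).const_mul (2 * a))).sub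
      ((hasDerivAt_inv ht0).const_mul (a ^ 2))).congr_deriv ?_
    field_simp
    ring
  have hcont : ContinuousOn (fun t : ℝ => (t - a) ^ 2 / t ^ 2) (Set.uIcc a b) :=
    ContinuousOn.div (by fun_prop) (by fun_prop) fun t ht => pow_ne_zero 2 (hne t ht)
  rw [intervalIntegral.integral_eq_sub_of_hasDerivAt hderiv hcont.intervalIntegrable]
  field_simp
  ring

lemma integral_fract_sq_div_sq_succ (n : ℕ) :
    ∫ t in (n : ℝ)..(n + 1 : ℕ), Int.fract t ^ 2 / t ^ 2 =
      2 - 1 / (n + 1) - 2 * n * (log (n + 1 : ℕ) - log n) := by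
  have hfract : ∫ t in (n : ℝ)..(n + 1 : ℕ), Int.fract t ^ 2 / t ^ 2 =
      ∫ t in (n : ℝ)..(n + 1 : ℕ), (t - n) ^ 2 / t ^ 2 := by
    refine intervalIntegral.integral_congr_Ioo_of_le (by simp) fun t ht => ?_
    have hfloor : ⌊t⌋ = n := Int.floor_eq_iff.2 ⟨ht.1.le, by simpa using ht.2⟩
    simp only [Int.fract, hfloor, Int.cast_natCast]
  rw [hfract]
  obtain rfl | hn := n.eq_zero_or_pos
  · have hone : ∫ t in (0 : ℝ)..1, t ^ 2 / t ^ 2 = ∫ _ in (0 : ℝ)..1, (1 : ℝ) :=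
      intervalIntegral.integral_congr_Ioo_of_le zero_le_one fun t ht =>
        div_self (pow_ne_zero 2 ht.1.ne')
    norm_num [hone]
  · rw [integral_sub_sq_div_sq (Nat.cast_pos.2 hn) (by positivity)]
    push_cast
    field_simp
    ring

lemma integral_fract_sq_div_sq (M : ℕ) :
    ∫ t in (0 : ℝ)..M, Int.fract t ^ 2 / t ^ 2 =
      2 * M - harmonic M - 2 * M * log M + 2 * log M.factorial := by
  have hint (a b : ℕ) :
      IntervalIntegrable (fun t : ℝ => Int.fract t ^ 2 / t ^ 2) volume a b :=
    ⟨integrableOn_fract_sq_div_sq.mono_set fun _ ht => a.cast_nonneg.trans_lt ht.1,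
      integrableOn_fract_sq_div_sq.mono_set fun _ ht => b.cast_nonneg.trans_lt ht.1⟩
  induction M with
  | zero => simp
  | succ n ih =>
    have hadd := intervalIntegral.integral_add_adjacent_intervals (hint 0 n) (hint n (n + 1))
    rw [Nat.cast_zero] at hadd
    rw [← hadd, ih, integral_fract_sq_div_sq_succ, harmonic_succ, Nat.factorial_succ,
      Nat.cast_mul, log_mul (by positivity) (by positivity)]
    push_cast
    ring

lemma abs_Aconst_sub_le {M : ℕ} (hM : 0 < M) :
    |Aconst - (2 * M - harmonic M - 2 * M * log M + 2 * log M.factorial)| ≤ (M : ℝ)⁻¹ := by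
  have hM' : (0 : ℝ) < M := Nat.cast_pos.2 hM
  have htail : Aconst - (2 * M - harmonic M - 2 * M * log M + 2 * log M.factorial) =
      ∫ t in Set.Ioi (M : ℝ), Int.fract t ^ 2 / t ^ 2 := by
    rw [← integral_fract_sq_div_sq, Aconst, ← intervalIntegral.integral_interval_add_Ioi
      integrableOn_fract_sq_div_sq (integrableOn_fract_sq_div_sq_Ioi hM'), add_sub_cancel_left]
  rw [htail, abs_of_nonneg (setIntegral_nonneg measurableSet_Ioi fun t _ => by positivity)]
  calc ∫ t in Set.Ioi (M : ℝ), Int.fract t ^ 2 / t ^ 2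
      ≤ ∫ t in Set.Ioi (M : ℝ), t ^ (-2 : ℝ) :=
        setIntegral_mono (integrableOn_fract_sq_div_sq_Ioi hM')
          (integrableOn_Ioi_rpow_of_lt (by norm_num) hM') fract_sq_div_sq_le_rpow
    _ = (M : ℝ)⁻¹ := by
      rw [integral_Ioi_rpow_of_lt (by norm_num) hM']
      norm_num [rpow_neg_one]

end Aconst

section GaussMap

open Real Set
open scoped ENNReal NNReal

/-- The Gauss map `x ↦ {1/x}` of the continued fraction algorithm. -/
noncomputable def gaussMap (x : ℝ) : ℝ := Int.fract x⁻¹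

lemma gaussMap_nonneg (x : ℝ) : 0 ≤ gaussMap x := Int.fract_nonneg _

lemma gaussMap_le_one (x : ℝ) : gaussMap x ≤ 1 := (Int.fract_lt_one _).le

lemma measurable_gaussMap : Measurable gaussMap := measurable_fract.comp measurable_inv

lemma irrational_gaussMap {x : ℝ} (hx : Irrational x) : Irrational (gaussMap x) :=
  hx.inv.sub_intCast _

lemma gaussMap_pos_of_irrational {x : ℝ} (hx : Irrational x) : 0 < gaussMap x :=
  (gaussMap_nonneg x).lt_of_ne' (irrational_gaussMap hx).ne_zero

lemma mul_gaussMap_le_half {x : ℝ} (h0 : 0 < x) (h1 : x ≤ 1) : x * gaussMap x ≤ 1 / 2 := by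
  have hfloor : (1 : ℝ) ≤ ⌊x⁻¹⌋ := by
    exact_mod_cast Int.le_floor.2 (by simpa using (one_le_inv₀ h0).2 h1)
  have hsplit : x * (⌊x⁻¹⌋ + gaussMap x) = 1 := by
    rw [gaussMap, Int.floor_add_fract, mul_inv_cancel₀ h0.ne']
  nlinarith [gaussMap_le_one x]

lemma lintegral_Ico_comp_fract (f : ℝ → ℝ≥0∞) (n : ℕ) :
    ∫⁻ u in Ico (n : ℝ) (n + 1), f (Int.fract u) = ∫⁻ y in Ioo (0 : ℝ) 1, f y := by
  have hpre : (fun y : ℝ => y + n) ⁻¹' Ico (n : ℝ) (n + 1) = Ico 0 1 := by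
    ext y
    simp
  rw [← (measurePreserving_add_right volume (n : ℝ)).setLIntegral_comp_preimage_emb
    (Homeomorph.addRight (n : ℝ)).measurableEmbedding, hpre, ← setLIntegral_congr Ioo_ae_eq_Ico]
  refine setLIntegral_congr_fun measurableSet_Ioo fun y hy => ?_
  simp only [Int.fract_add_natCast, Int.fract_eq_self.2 ⟨hy.1.le, hy.2⟩]

lemma setLIntegral_Ioo_eq_comp_inv (f : ℝ → ℝ≥0∞) :
    ∫⁻ x in Ioo (0 : ℝ) 1, f x =
      ∫⁻ u in Ioi (1 : ℝ), ENNReal.ofReal |-(u ^ 2)⁻¹| * f u⁻¹ := by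
  have himage : Inv.inv '' Ioi (1 : ℝ) = Ioo 0 1 := by
    rw [image_inv_eq_inv, inv_Ioi₀ one_pos, inv_one]
  rw [← himage, lintegral_image_eq_lintegral_abs_deriv_mul measurableSet_Ioi
    (fun u hu => (hasDerivAt_inv (zero_lt_one.trans hu).ne').hasDerivWithinAt) inv_injective.injOn]

lemma Ioi_one_subset_iUnion_Ico :
    Ioi (1 : ℝ) ⊆ ⋃ k : ℕ, Ico ((k + 1 : ℕ) : ℝ) ((k + 1 : ℕ) + 1) := by
  intro u (hu : 1 < u)
  have hfloor : ⌊u⌋₊ - 1 + 1 = ⌊u⌋₊ := Nat.sub_add_cancel (Nat.floor_pos.2 hu.le)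
  refine mem_iUnion.2 ⟨⌊u⌋₊ - 1, ?_⟩
  rw [hfloor]
  exact ⟨Nat.floor_le (by linarith), Nat.lt_floor_add_one u⟩

lemma exists_lintegral_rpow_mul_comp_gaussMap_le {s : ℝ} (hs : s < 1) :
    ∃ D : ℝ≥0, ∀ f : ℝ → ℝ≥0∞,
      ∫⁻ x in Ioo (0 : ℝ) 1, ENNReal.ofReal (x ^ (-s)) * f (gaussMap x) ≤
        D * ∫⁻ y in Ioo (0 : ℝ) 1, f y := by
  have hsum : Summable fun k : ℕ => ((k + 1 : ℕ) : ℝ) ^ (s - 2) :=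
    (summable_nat_add_iff 1).2 (summable_nat_rpow.2 (by linarith))
  refine ⟨(∑' k : ℕ, ((k + 1 : ℕ) : ℝ) ^ (s - 2)).toNNReal, fun f => ?_⟩
  calc ∫⁻ x in Ioo (0 : ℝ) 1, ENNReal.ofReal (x ^ (-s)) * f (gaussMap x)
      = ∫⁻ u in Ioi (1 : ℝ), ENNReal.ofReal (u ^ (s - 2)) * f (Int.fract u) := by
        rw [setLIntegral_Ioo_eq_comp_inv]
        refine setLIntegral_congr_fun measurableSet_Ioi fun u (hu : 1 < u) => ?_
        have hu0 : 0 < u := by linarith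
        have hweight : |-(u ^ 2)⁻¹| * u⁻¹ ^ (-s) = u ^ (s - 2) := by
          rw [abs_neg, abs_of_pos (by positivity), inv_rpow hu0.le, rpow_neg hu0.le, inv_inv,
            rpow_sub hu0, rpow_two, div_eq_inv_mul]
        simp only [gaussMap, inv_inv]
        rw [← mul_assoc, ← ENNReal.ofReal_mul (abs_nonneg _), hweight]
    _ ≤ ∑' k : ℕ, ∫⁻ u in Ico ((k + 1 : ℕ) : ℝ) ((k + 1 : ℕ) + 1),
          ENNReal.ofReal (u ^ (s - 2)) * f (Int.fract u) :=
        (lintegral_mono_set Ioi_one_subset_iUnion_Ico).trans (lintegral_iUnion_le _ _)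
    _ ≤ ∑' k : ℕ, ENNReal.ofReal (((k + 1 : ℕ) : ℝ) ^ (s - 2)) * ∫⁻ y in Ioo (0 : ℝ) 1, f y := by
        refine ENNReal.tsum_le_tsum fun k => ?_
        rw [← lintegral_Ico_comp_fract f (k + 1), ← lintegral_const_mul' _ _ ENNReal.ofReal_ne_top]
        refine setLIntegral_mono' measurableSet_Ico fun u hu => ?_
        exact mul_le_mul_left (ENNReal.ofReal_le_ofReal
          (rpow_le_rpow_of_nonpos (by positivity) hu.1 (by linarith))) _
    _ = _ := by
        rw [ENNReal.tsum_mul_right, ← ENNReal.ofReal_tsum_of_nonneg (fun k => by positivity) hsum]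
        rfl

lemma quasiMeasurePreserving_gaussMap :
    Measure.QuasiMeasurePreserving gaussMap (volume.restrict (Ioo 0 1))
      (volume.restrict (Ioo 0 1)) := by
  refine ⟨measurable_gaussMap, Measure.AbsolutelyContinuous.mk fun S hS hnull => ?_⟩
  obtain ⟨D, hD⟩ := exists_lintegral_rpow_mul_comp_gaussMap_le zero_lt_one
  have h := hD (S.indicator 1)
  rw [lintegral_indicator_one hS, hnull, mul_zero] at h
  rw [Measure.map_apply measurable_gaussMap hS, ← lintegral_indicator_one (measurable_gaussMap hS)]
  simp only [neg_zero, rpow_zero, ENNReal.ofReal_one, one_mul, nonpos_iff_eq_zero] at h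
  exact h

end GaussMap

section SawSum

open Real Finset

/-- The partial sum `∑_{l=1}^N (1 - 2{lx}) / l` of the series defining `g`. -/
noncomputable def sawSum (N : ℕ) (x : ℝ) : ℝ :=
  ∑ l ∈ range N, (1 - 2 * Int.fract (((l : ℝ) + 1) * x)) / ((l : ℝ) + 1)

lemma sawSum_fract (N : ℕ) (y : ℝ) : sawSum N (Int.fract y) = sawSum N y := by
  refine sum_congr rfl fun l _ => ?_
  congr 3
  refine Int.fract_eq_fract.2 ⟨-((l + 1) * ⌊y⌋), ?_⟩
  rw [Int.fract]
  push_cast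
  ring

lemma lt_floor_mul_iff_floor_div_le {x : ℝ} (hx : Irrational x) (h0 : 0 < x) (l m : ℕ) :
    m < ⌊((l : ℝ) + 1) * x⌋₊ ↔ ⌊((m : ℝ) + 1) * x⁻¹⌋₊ ≤ l := by
  have hne : (m : ℝ) + 1 ≠ ((l : ℝ) + 1) * x := by
    exact_mod_cast ((hx.natCast_mul l.succ_ne_zero).ne_nat (m + 1)).symm
  rw [← Nat.succ_le_iff, Nat.le_floor_iff (by positivity), ← Nat.lt_succ_iff,
    Nat.floor_lt (by positivity), mul_inv_lt_iff₀ h0]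
  push_cast
  exact hne.le_iff_lt

lemma sum_floor_nsmul {M : Type*} [AddCommMonoid M] {x : ℝ} (hx : Irrational x) (h0 : 0 < x)
    (f : ℕ → M) (N : ℕ) :
    ∑ l ∈ range N, ⌊((l : ℝ) + 1) * x⌋₊ • f l =
      ∑ m ∈ range ⌊(N : ℝ) * x⌋₊, ∑ l ∈ Ico ⌊((m : ℝ) + 1) * x⁻¹⌋₊ N, f l := by
  have hrow (l : ℕ) : ⌊((l : ℝ) + 1) * x⌋₊ • f l = ∑ _m ∈ range ⌊((l : ℝ) + 1) * x⌋₊, f l := by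
    rw [sum_const, card_range]
  simp_rw [hrow]
  refine sum_comm' fun l m => ?_
  simp only [mem_range, mem_Ico, ← lt_floor_mul_iff_floor_div_le hx h0]
  refine ⟨fun ⟨hl, hm⟩ => ⟨⟨hm, hl⟩, hm.trans_le (Nat.floor_mono ?_)⟩, fun h => ⟨h.1.2, h.1.1⟩⟩
  gcongr
  exact_mod_cast hl

lemma harmonic_cast_eq_sum (N : ℕ) : (harmonic N : ℝ) = ∑ l ∈ range N, ((l : ℝ) + 1)⁻¹ := by
  simp [harmonic]

lemma sum_floor_div {x : ℝ} (hx : Irrational x) (h0 : 0 < x) (N : ℕ) :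
    ∑ l ∈ range N, (⌊((l : ℝ) + 1) * x⌋₊ : ℝ) / ((l : ℝ) + 1) =
      ∑ m ∈ range ⌊(N : ℝ) * x⌋₊, ((harmonic N : ℝ) - harmonic ⌊((m : ℝ) + 1) * x⁻¹⌋₊) := by
  simp_rw [div_eq_mul_inv, ← nsmul_eq_mul _ ((_ : ℝ)⁻¹)]
  rw [sum_floor_nsmul hx h0]
  refine sum_congr rfl fun m hm => ?_
  have hle : ⌊((m : ℝ) + 1) * x⁻¹⌋₊ ≤ N := by
    refine Nat.floor_le_of_le ?_
    rw [mul_inv_le_iff₀ h0]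
    exact_mod_cast (Nat.le_floor_iff (by positivity)).1 (Nat.succ_le_iff.2 (mem_range.1 hm))
  rw [sum_Ico_eq_sub _ hle, harmonic_cast_eq_sum, harmonic_cast_eq_sum]

lemma sawSum_eq_harmonic {x : ℝ} (hx : Irrational x) (h0 : 0 < x) (N : ℕ) :
    sawSum N x = harmonic N - 2 * (N * x) + 2 * ∑ m ∈ range ⌊(N : ℝ) * x⌋₊,
      ((harmonic N : ℝ) - harmonic ⌊((m : ℝ) + 1) * x⁻¹⌋₊) := by
  have hN : 2 * (N * x) = ∑ l ∈ range N, 2 * x := by simp [mul_left_comm]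
  rw [← sum_floor_div hx h0, harmonic_cast_eq_sum, hN, mul_sum, ← sum_sub_distrib,
    ← sum_add_distrib, sawSum]
  refine sum_congr rfl fun l _ => ?_
  have hfract : Int.fract (((l : ℝ) + 1) * x) = ((l : ℝ) + 1) * x - ⌊((l : ℝ) + 1) * x⌋₊ := by
    rw [Int.fract, natCast_floor_eq_intCast_floor (by positivity)]
  rw [hfract]
  field_simp
  ring

lemma sum_inv_succ_sq_le (M : ℕ) : ∑ m ∈ range M, (((m : ℝ) + 1) ^ 2)⁻¹ ≤ 2 := by
  have h := sum_Ioo_inv_sq_le (α := ℝ) 0 (M + 1)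
  have hIoo : Ioo 0 (M + 1) = Ico (0 + 1) (M + 1) := rfl
  rw [hIoo, ← sum_Ico_add' (fun i : ℕ => ((i : ℝ) ^ 2)⁻¹)] at h
  simpa using h

lemma sum_log_succ (M : ℕ) : ∑ m ∈ range M, log ((m : ℝ) + 1) = log M.factorial := by
  rw [← prod_range_add_one_eq_factorial, Nat.cast_prod, log_prod fun m _ => by positivity]
  push_cast
  rfl

lemma sum_harmonic_floor_approx {x : ℝ} (h0 : 0 < x) (M : ℕ) :
    ∑ m ∈ range M, (log (((m : ℝ) + 1) * x⁻¹) + eulerMascheroniConstant +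
        (1 - 2 * Int.fract (((m : ℝ) + 1) * x⁻¹)) / (2 * (((m : ℝ) + 1) * x⁻¹))) =
      log M.factorial - M * log x + M * eulerMascheroniConstant +
        x / 2 * sawSum M (gaussMap x) := by
  have hterm (m : ℕ) : log (((m : ℝ) + 1) * x⁻¹) + eulerMascheroniConstant +
        (1 - 2 * Int.fract (((m : ℝ) + 1) * x⁻¹)) / (2 * (((m : ℝ) + 1) * x⁻¹)) =
      log ((m : ℝ) + 1) - log x + eulerMascheroniConstant +
        x / 2 * ((1 - 2 * Int.fract (((m : ℝ) + 1) * x⁻¹)) / ((m : ℝ) + 1)) := by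
    rw [log_mul (by positivity) (by positivity), log_inv]
    field_simp
    ring
  simp only [hterm, sum_add_distrib, sum_sub_distrib, sum_log_succ, ← mul_sum, sum_const,
    card_range, nsmul_eq_mul, gaussMap, sawSum_fract]
  rfl

lemma abs_sum_harmonic_floor_sub_le {x : ℝ} (h0 : 0 < x) (h1 : x ≤ 1) (M : ℕ) :
    |∑ m ∈ range M, (harmonic ⌊((m : ℝ) + 1) * x⁻¹⌋₊ : ℝ) -
      (log M.factorial - M * log x + M * eulerMascheroniConstant +
        x / 2 * sawSum M (gaussMap x))| ≤ 6 * x := by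
  rw [← sum_harmonic_floor_approx h0, ← sum_sub_distrib]
  calc _ ≤ ∑ m ∈ range M, 3 * x ^ 2 * (((m : ℝ) + 1) ^ 2)⁻¹ := by
        refine (abs_sum_le_sum_abs _ _).trans (sum_le_sum fun m _ => ?_)
        have hy : 1 ≤ ((m : ℝ) + 1) * x⁻¹ :=
          one_le_mul_of_one_le_of_one_le (by simp) ((one_le_inv₀ h0).2 h1)
        refine (le_of_eq ?_).trans ((abs_harmonic_floor_sub_le hy).trans_eq ?_)
        · congr 1
          ring
        · field_simp
    _ ≤ 3 * x ^ 2 * 2 := by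
        rw [← mul_sum]
        gcongr
        exact sum_inv_succ_sq_le M
    _ ≤ 6 * x := by nlinarith

lemma abs_mul_log_sub_log_sub_le {m w : ℝ} (hm : 0 < m) (hmw : m ≤ w) (hwm : w ≤ m + 1) :
    |m * (log w - log m) - (w - m)| ≤ m⁻¹ := by
  have hw : 0 < w := hm.trans_le hmw
  have hupp : m * (log w - log m) ≤ w - m := by
    calc m * (log w - log m) ≤ m * ((w - m) / m) := by gcongr; exact log_sub_log_le hm hw
      _ = w - m := by field_simp
  have hlow : w - m - m⁻¹ ≤ m * (log w - log m) := by
    have hsq : (w - m) ^ 2 / w ≤ m⁻¹ := by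
      rw [← one_div]
      gcongr
      nlinarith
    calc w - m - m⁻¹ ≤ w - m - (w - m) ^ 2 / w := by gcongr
      _ = m * -((m - w) / w) := by field_simp; ring
      _ ≤ m * (log w - log m) := by gcongr; linarith [log_sub_log_le hw hm]
  rw [abs_le]
  constructor <;> linarith [inv_pos.2 hm]

lemma abs_sawSum_add_le {x : ℝ} (hx : Irrational x) (h0 : 0 < x) (h1 : x ≤ 1) {N : ℕ}
    (hM : 0 < ⌊(N : ℝ) * x⌋₊) :
    |sawSum N x + x * sawSum ⌊(N : ℝ) * x⌋₊ (gaussMap x) + log x + Aconst| ≤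
      6 / ⌊(N : ℝ) * x⌋₊ + 14 * x := by
  have hN : 0 < N := Nat.pos_of_ne_zero fun h => by simp [h] at hM
  have hN' : (0 : ℝ) < N := Nat.cast_pos.2 hN
  have hMw := Nat.floor_le (show (0 : ℝ) ≤ N * x by positivity)
  have hwM := (Nat.lt_floor_add_one ((N : ℝ) * x)).le
  have hS := sawSum_eq_harmonic hx h0 N
  have hT := abs_sum_harmonic_floor_sub_le h0 h1 ⌊(N : ℝ) * x⌋₊
  have hA := abs_Aconst_sub_le hM
  have hεN := abs_harmonic_sub_log_sub_gamma_le hN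
  have hεM := abs_harmonic_sub_log_sub_gamma_le hM
  rw [sum_sub_distrib, sum_const, card_range, nsmul_eq_mul] at hS
  generalize ⌊(N : ℝ) * x⌋₊ = M at *
  generalize ∑ m ∈ range M, (harmonic ⌊((m : ℝ) + 1) * x⁻¹⌋₊ : ℝ) = T at *
  generalize sawSum M (gaussMap x) = S at *
  have hM' : (0 : ℝ) < M := Nat.cast_pos.2 hM
  have hNM : (N : ℝ)⁻¹ ≤ (M : ℝ)⁻¹ := inv_anti₀ hM' (by nlinarith)
  have hL := log_sub_log_le hM' (show 0 < (N : ℝ) * x by positivity)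
  have hL0 := log_le_log hM' hMw
  have hML := abs_mul_log_sub_log_sub_le hM' hMw hwM
  have hL1 : ((N : ℝ) * x - M) / M ≤ (M : ℝ)⁻¹ := by rw [← one_div]; gcongr; linarith
  have hMεN : |M * (harmonic N - log N - eulerMascheroniConstant)| ≤ x := by
    rw [abs_mul, abs_of_pos hM']
    calc _ ≤ N * x * (N : ℝ)⁻¹ := by gcongr
      _ = x := by field_simp
  rw [log_mul hN'.ne' h0.ne'] at hL hL0 hML
  rw [hS, div_eq_mul_inv]
  rw [abs_le] at *
  constructor <;> linarith

lemma abs_sawSum_le_of_floor_eq_zero {x : ℝ} (hx : Irrational x) (h0 : 0 < x) (h1 : x ≤ 1) {N : ℕ}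
    (hM : ⌊(N : ℝ) * x⌋₊ = 0) : |sawSum N x| ≤ 2 - log x := by
  have hlog : log x ≤ 0 := log_nonpos h0.le h1
  obtain rfl | hN := N.eq_zero_or_pos
  · rw [sawSum, sum_range_zero, abs_zero]
    linarith
  have hNx : (N : ℝ) * x < 1 := Nat.floor_eq_zero.1 hM
  have hlogN : log N ≤ -log x := by
    have := log_nonpos (by positivity) hNx.le
    rw [log_mul (by positivity) h0.ne'] at this
    linarith
  have hpos : (0 : ℝ) ≤ harmonic N := by rw [harmonic_cast_eq_sum]; positivity
  rw [sawSum_eq_harmonic hx h0, hM, sum_range_zero, abs_le]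
  constructor <;> nlinarith [harmonic_le_one_add_log N]

lemma abs_sawSum_le {x : ℝ} (hx : Irrational x) (h0 : 0 < x) (h1 : x ≤ 1) (N : ℕ) :
    |sawSum N x| ≤ -log x + (|Aconst| + 20) + x * |sawSum ⌊(N : ℝ) * x⌋₊ (gaussMap x)| := by
  obtain hM | hM := Nat.eq_zero_or_pos ⌊(N : ℝ) * x⌋₊
  · have := abs_sawSum_le_of_floor_eq_zero hx h0 h1 hM
    have : 0 ≤ x * |sawSum ⌊(N : ℝ) * x⌋₊ (gaussMap x)| := by positivity
    linarith [abs_nonneg Aconst]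
  · have h := abs_sawSum_add_le hx h0 h1 hM
    have h6 : 6 / (⌊(N : ℝ) * x⌋₊ : ℝ) ≤ 6 := div_le_self (by norm_num) (Nat.one_le_cast.2 hM)
    generalize sawSum ⌊(N : ℝ) * x⌋₊ (gaussMap x) = S at *
    have hS : |x * S| = x * |S| := by rw [abs_mul, abs_of_pos h0]
    rw [← hS]
    have hlog := log_nonpos h0.le h1
    rw [abs_le] at *
    constructor <;> linarith [neg_abs_le (x * S), le_abs_self (x * S), neg_abs_le Aconst,
      le_abs_self Aconst]

end SawSum

section Brjuno

open Real Set
open scoped ENNReal NNReal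

/-- The `n`-th truncation of the Brjuno-type series `∑ j, β_j x * (-log (T^j x) + c)`, where
`T = gaussMap` and `β_j x = x * T x * ⋯ * T^(j-1) x`; it dominates the partial sums of `g`. -/
noncomputable def brjunoSum (c : ℝ) : ℕ → ℝ → ℝ
  | 0, _ => 0
  | n + 1, x => -log x + c + x * brjunoSum c n (gaussMap x)

lemma brjunoSum_nonneg {c : ℝ} (hc : 0 ≤ c) (n : ℕ) {x : ℝ} (h0 : 0 ≤ x) (h1 : x ≤ 1) :
    0 ≤ brjunoSum c n x := by
  induction n generalizing x with
  | zero => exact le_rfl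
  | succ n ih =>
    have := mul_nonneg h0 (ih (gaussMap_nonneg x) (gaussMap_le_one x))
    rw [brjunoSum]
    linarith [log_nonpos h0 h1]

lemma brjunoSum_add_two_le {c : ℝ} (hc : 0 ≤ c) (n : ℕ) {x : ℝ} (h0 : 0 < x) (h1 : x ≤ 1) :
    brjunoSum c (n + 2) x ≤
      2 * c - log x - log (gaussMap x) + brjunoSum c n (gaussMap (gaussMap x)) / 2 := by
  have hlog := log_nonpos (gaussMap_nonneg x) (gaussMap_le_one x)
  have hB := brjunoSum_nonneg hc n (gaussMap_nonneg (gaussMap x)) (gaussMap_le_one (gaussMap x))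
  have hhalf := mul_le_mul_of_nonneg_right (mul_gaussMap_le_half h0 h1) hB
  simp only [brjunoSum]
  nlinarith [mul_le_mul_of_nonneg_right h1 (show 0 ≤ -log (gaussMap x) + c by linarith)]

lemma abs_sawSum_le_brjunoSum {n N : ℕ} (hN : N ≤ n) {x : ℝ} (hx : Irrational x) (h0 : 0 < x)
    (h1 : x ≤ 1) : |sawSum N x| ≤ brjunoSum (|Aconst| + 20) n x := by
  induction n generalizing N x with
  | zero => simp [Nat.le_zero.1 hN, sawSum, brjunoSum]
  | succ n ih =>
    refine (abs_sawSum_le hx h0 h1 N).trans ?_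
    have hfloor : ⌊(N : ℝ) * x⌋₊ ≤ n := by
      obtain rfl | hN0 := N.eq_zero_or_pos
      · simp
      · have hlt : x < 1 := h1.lt_of_ne hx.ne_one
        have : ⌊(N : ℝ) * x⌋₊ < N :=
          (Nat.floor_lt (by positivity)).2 (mul_lt_of_lt_one_right (by positivity) hlt)
        omega
    rw [brjunoSum]
    gcongr
    exact ih hfloor (irrational_gaussMap hx) (gaussMap_pos_of_irrational hx) (gaussMap_le_one x)

lemma ae_irrational : ∀ᵐ x : ℝ, Irrational x := (countable_range ((↑) : ℚ → ℝ)).ae_notMem volume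

lemma ae_restrict_Ioo_irrational :
    ∀ᵐ x ∂volume.restrict (Ioo (0 : ℝ) 1), Irrational x ∧ 0 < x ∧ x < 1 := by
  filter_upwards [ae_restrict_mem measurableSet_Ioo, ae_restrict_of_ae ae_irrational]
    with x hx hirr using ⟨hirr, hx⟩

lemma exp_mul_brjunoSum_add_two_le {c s : ℝ} (hc : 0 ≤ c) (hs : 0 ≤ s) (n : ℕ) {x : ℝ}
    (hx : Irrational x) (h0 : 0 < x) (h1 : x ≤ 1) :
    exp (s * brjunoSum c (n + 2) x) ≤ exp (2 * s * c) * (x ^ (-s) * (gaussMap x ^ (-s) *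
      exp (s * brjunoSum c n (gaussMap (gaussMap x)) / 2))) := by
  rw [rpow_def_of_pos h0, rpow_def_of_pos (gaussMap_pos_of_irrational hx), ← exp_add, ← exp_add,
    ← exp_add, exp_le_exp]
  linarith [mul_le_mul_of_nonneg_left (brjunoSum_add_two_le hc n h0 h1) hs]

lemma exists_lintegral_exp_brjunoSum_add_two_le {c s : ℝ} (hc : 0 ≤ c) (hs0 : 0 ≤ s)
    (hs1 : s < 1) : ∃ K : ℝ≥0, ∀ n : ℕ,
      ∫⁻ x in Ioo (0 : ℝ) 1, ENNReal.ofReal (exp (s * brjunoSum c (n + 2) x)) ≤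
        K * ∫⁻ x in Ioo (0 : ℝ) 1, ENNReal.ofReal (exp (s * brjunoSum c n x / 2)) := by
  obtain ⟨D, hD⟩ := exists_lintegral_rpow_mul_comp_gaussMap_le hs1
  refine ⟨(exp (2 * s * c)).toNNReal * (D * D), fun n => ?_⟩
  calc _ ≤ ∫⁻ x in Ioo (0 : ℝ) 1, ENNReal.ofReal (exp (2 * s * c)) *
          (ENNReal.ofReal (x ^ (-s)) * (ENNReal.ofReal (gaussMap x ^ (-s)) *
            ENNReal.ofReal (exp (s * brjunoSum c n (gaussMap (gaussMap x)) / 2)))) := by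
        refine lintegral_mono_ae (ae_restrict_Ioo_irrational.mono fun x hx => ?_)
        have := gaussMap_nonneg x
        rw [← ENNReal.ofReal_mul (by positivity), ← ENNReal.ofReal_mul (rpow_nonneg hx.2.1.le _),
          ← ENNReal.ofReal_mul (by positivity)]
        exact ENNReal.ofReal_le_ofReal
          (exp_mul_brjunoSum_add_two_le hc hs0 n hx.1 hx.2.1 hx.2.2.le)
    _ ≤ ENNReal.ofReal (exp (2 * s * c)) * (D * (D * ∫⁻ x in Ioo (0 : ℝ) 1,
          ENNReal.ofReal (exp (s * brjunoSum c n x / 2)))) := by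
        rw [lintegral_const_mul' _ _ ENNReal.ofReal_ne_top]
        gcongr
        refine (hD fun y => ENNReal.ofReal (y ^ (-s)) *
          ENNReal.ofReal (exp (s * brjunoSum c n (gaussMap y) / 2))).trans ?_
        gcongr
        exact hD fun z => ENNReal.ofReal (exp (s * brjunoSum c n z / 2))
    _ = _ := by simp only [ENNReal.ofReal, ENNReal.coe_mul, mul_assoc]

lemma mul_lintegral_exp_half_le {α : Type*} [MeasurableSpace α] (μ : Measure α)
    [IsProbabilityMeasure μ] (K : ℝ≥0) (u : α → ℝ) :
    K * ∫⁻ x, ENNReal.ofReal (exp (u x / 2)) ∂μ ≤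
      (K ^ 2 + ∫⁻ x, ENNReal.ofReal (exp (u x)) ∂μ) / 2 := by
  have hAMGM (x : α) : K * ENNReal.ofReal (exp (u x / 2)) ≤
      (K ^ 2 + ENNReal.ofReal (exp (u x))) / 2 := by
    have hsq : exp (u x) = exp (u x / 2) ^ 2 := by rw [← exp_nat_mul]; congr 1; push_cast; ring
    rw [hsq, ENNReal.ofReal_pow (exp_pos _).le, ENNReal.le_div_iff_mul_le (by simp) (by simp),
      mul_comm _ 2, ← mul_assoc]
    rw [ENNReal.ofReal]
    exact_mod_cast two_mul_le_add_sq K (exp (u x / 2)).toNNReal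
  calc K * ∫⁻ x, ENNReal.ofReal (exp (u x / 2)) ∂μ
      = ∫⁻ x, K * ENNReal.ofReal (exp (u x / 2)) ∂μ :=
        (lintegral_const_mul' _ _ ENNReal.coe_ne_top).symm
    _ ≤ ∫⁻ x, (K ^ 2 + ENNReal.ofReal (exp (u x))) / 2 ∂μ := lintegral_mono hAMGM
    _ = (K ^ 2 + ∫⁻ x, ENNReal.ofReal (exp (u x)) ∂μ) / 2 := by
        simp_rw [div_eq_mul_inv]
        rw [lintegral_mul_const' _ _ (by simp), lintegral_add_left measurable_const]
        simp

lemma exists_lintegral_exp_brjunoSum_le {c s : ℝ} (hc : 0 ≤ c) (hs0 : 0 ≤ s) (hs1 : s < 1) :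
    ∃ B : ℝ≥0, ∀ n : ℕ,
      ∫⁻ x in Ioo (0 : ℝ) 1, ENNReal.ofReal (exp (s * brjunoSum c (2 * n) x)) ≤ B := by
  obtain ⟨K, hK⟩ := exists_lintegral_exp_brjunoSum_add_two_le hc hs0 hs1
  have : IsProbabilityMeasure (volume.restrict (Ioo (0 : ℝ) 1)) := ⟨by simp⟩
  refine ⟨K ^ 2 + 1, fun n => ?_⟩
  push_cast
  induction n with
  | zero => simp [brjunoSum]
  | succ n ih =>
    calc _ ≤ (K ^ 2 + ∫⁻ x in Ioo (0 : ℝ) 1,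
          ENNReal.ofReal (exp (s * brjunoSum c (2 * n) x))) / 2 :=
          (hK (2 * n)).trans (mul_lintegral_exp_half_le _ K _)
      _ ≤ ((K ^ 2 + 1) + (K ^ 2 + 1)) / 2 := by
          gcongr
          exact le_self_add
      _ = (K : ℝ≥0∞) ^ 2 + 1 := by rw [ENNReal.add_div, ENNReal.add_halves]

end Brjuno

section AESawSum

open Real Set
open scoped ENNReal

/-- `g` is the almost everywhere sum on `(0, 1)` of the series `∑ l, (1 - 2{lx}) / l`. -/
def HasAESawSum (g : ℝ → ℝ) : Prop :=
  ∀ᵐ x ∂volume.restrict (Ioo (0 : ℝ) 1), Tendsto (fun N => sawSum N x) atTop (nhds (g x))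

lemma measurable_sawSum (N : ℕ) : Measurable (sawSum N) :=
  Finset.measurable_fun_sum _ fun _ _ =>
    (((measurable_fract.comp (measurable_id.const_mul _)).const_mul 2).const_sub 1).div_const _

lemma sawSum_one_sub {x : ℝ} (hx : Irrational x) (N : ℕ) : sawSum N (1 - x) = -sawSum N x := by
  rw [sawSum, sawSum, ← Finset.sum_neg_distrib]
  refine Finset.sum_congr rfl fun l _ => ?_
  have hirr : Irrational (((l : ℝ) + 1) * x) := by exact_mod_cast hx.natCast_mul l.succ_ne_zero
  have hreflect : ((l : ℝ) + 1) * (1 - x) = -(((l : ℝ) + 1) * x) + (l + 1 : ℕ) := by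
    push_cast
    ring
  rw [hreflect, Int.fract_add_natCast, Int.fract_neg (hirr.sub_intCast _).ne_zero]
  ring

namespace HasAESawSum

variable {g : ℝ → ℝ}

lemma aemeasurable (hg : HasAESawSum g) : AEMeasurable g (volume.restrict (Ioo 0 1)) :=
  aemeasurable_of_tendsto_metrizable_ae atTop (fun N => (measurable_sawSum N).aemeasurable) hg

lemma lintegral_exp_abs_lt_top (hg : HasAESawSum g) {s : ℝ} (hs0 : 0 ≤ s) (hs1 : s < 1) :
    ∫⁻ x in Ioo (0 : ℝ) 1, ENNReal.ofReal (exp (s * |g x|)) < ∞ := by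
  obtain ⟨B, hB⟩ :=
    exists_lintegral_exp_brjunoSum_le (show 0 ≤ |Aconst| + 20 by positivity) hs0 hs1
  refine lt_of_le_of_lt ?_ (ENNReal.coe_lt_top (r := B))
  calc _ = ∫⁻ x in Ioo (0 : ℝ) 1,
        liminf (fun N => ENNReal.ofReal (exp (s * |sawSum N x|))) atTop := by
        refine lintegral_congr_ae (hg.mono fun x hx => (Tendsto.liminf_eq ?_).symm)
        exact ENNReal.tendsto_ofReal ((continuous_exp.tendsto _).comp (hx.abs.const_mul _))
    _ ≤ liminf (fun N => ∫⁻ x in Ioo (0 : ℝ) 1, ENNReal.ofReal (exp (s * |sawSum N x|))) atTop :=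
        lintegral_liminf_le fun N => by
          have := measurable_sawSum N
          fun_prop
    _ ≤ liminf (fun _ : ℕ => (B : ℝ≥0∞)) atTop := by
        refine liminf_le_liminf (Eventually.of_forall fun N => le_trans ?_ (hB N))
        refine lintegral_mono_ae (ae_restrict_Ioo_irrational.mono fun x ⟨hx, h0, h1⟩ => ?_)
        gcongr
        exact abs_sawSum_le_brjunoSum (by omega) hx h0 h1.le
    _ = B := liminf_const _

lemma integrableOn_exp_abs (hg : HasAESawSum g) {s : ℝ} (hs0 : 0 ≤ s) (hs1 : s < 1) :
    IntegrableOn (fun x => exp (s * |g x|)) (Ioo 0 1) := by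
  have := hg.aemeasurable
  exact (lintegral_ofReal_ne_top_iff_integrable (AEMeasurable.aestronglyMeasurable (by fun_prop))
    (.of_forall fun x => (exp_pos _).le)).1 (hg.lintegral_exp_abs_lt_top hs0 hs1).ne

lemma integrableOn_rpow_mul_exp_abs_gaussMap (hg : HasAESawSum g) {s : ℝ} (hs0 : 0 ≤ s)
    (hs1 : s < 1) :
    IntegrableOn (fun x => x ^ (-s) * exp (s * |g (gaussMap x)|)) (Ioo 0 1) := by
  obtain ⟨D, hD⟩ := exists_lintegral_rpow_mul_comp_gaussMap_le hs1
  have hm : AEMeasurable (fun x => g (gaussMap x)) (volume.restrict (Ioo 0 1)) :=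
    hg.aemeasurable.comp_quasiMeasurePreserving quasiMeasurePreserving_gaussMap
  have hnonneg : ∀ᵐ x ∂volume.restrict (Ioo (0 : ℝ) 1),
      0 ≤ x ^ (-s) * exp (s * |g (gaussMap x)|) :=
    ae_restrict_Ioo_irrational.mono fun x hx =>
      mul_nonneg (rpow_nonneg hx.2.1.le _) (exp_pos _).le
  refine (lintegral_ofReal_ne_top_iff_integrable
    ((measurable_id.pow_const (-s)).aemeasurable.mul
      (measurable_exp.comp_aemeasurable (hm.abs.const_mul s))).aestronglyMeasurable
    hnonneg).1 (ne_top_of_le_ne_top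
      (ENNReal.mul_ne_top ENNReal.coe_ne_top (hg.lintegral_exp_abs_lt_top hs0 hs1).ne)
      ((lintegral_congr_ae ?_).trans_le (hD fun y => ENNReal.ofReal (exp (s * |g y|)))))
  exact ae_restrict_Ioo_irrational.mono fun x hx => ENNReal.ofReal_mul (rpow_nonneg hx.2.1.le _)

lemma ae_abs_add_log_add_le (hg : HasAESawSum g) : ∀ᵐ x ∂volume.restrict (Ioo (0 : ℝ) 1),
    |g x + (log x + Aconst)| ≤ x * (14 + |g (gaussMap x)|) := by
  filter_upwards [hg, quasiMeasurePreserving_gaussMap.ae hg, ae_restrict_Ioo_irrational]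
    with x hgx hgTx ⟨hx, h0, h1⟩
  have hM : Tendsto (fun N : ℕ => ⌊(N : ℝ) * x⌋₊) atTop atTop :=
    tendsto_nat_floor_atTop.comp (tendsto_natCast_atTop_atTop.atTop_mul_const h0)
  have hleft := (((hgx.add ((hgTx.comp hM).const_mul x)).add_const (log x)).add_const Aconst).abs
  have hright : Tendsto (fun N : ℕ => 6 / (⌊(N : ℝ) * x⌋₊ : ℝ) + 14 * x) atTop
      (nhds (0 + 14 * x)) :=
    ((tendsto_natCast_atTop_atTop.comp hM).const_div_atTop 6).add_const _
  have hlim : |g x + x * g (gaussMap x) + log x + Aconst| ≤ 0 + 14 * x :=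
    le_of_tendsto_of_tendsto hleft hright
      ((hM.eventually_ge_atTop 1).mono fun N hN => abs_sawSum_add_le hx h0 h1.le hN)
  calc |g x + (log x + Aconst)|
      = |g x + x * g (gaussMap x) + log x + Aconst - x * g (gaussMap x)| := by
        congr 1
        ring
    _ ≤ |g x + x * g (gaussMap x) + log x + Aconst| + |x * g (gaussMap x)| := abs_sub _ _
    _ ≤ x * (14 + |g (gaussMap x)|) := by
        rw [abs_mul, abs_of_pos h0]
        linarith

lemma ae_one_sub_eq_neg (hg : HasAESawSum g) :
    ∀ᵐ x ∂volume.restrict (Ioo (0 : ℝ) 1), g (1 - x) = -g x := by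
  have hreflect : Measure.QuasiMeasurePreserving (fun x : ℝ => 1 - x) :=
    (Measure.measurePreserving_sub_left volume (1 : ℝ)).quasiMeasurePreserving
  filter_upwards [hg, ae_restrict_Ioo_irrational,
    ae_restrict_of_ae (hreflect.ae (ae_imp_of_ae_restrict hg))] with x hgx ⟨hx, h0, h1⟩ hg1x
  refine tendsto_nhds_unique (hg1x ⟨by linarith, by linarith⟩) ?_
  simpa only [sawSum_one_sub hx] using hgx.neg

end HasAESawSum

lemma integral_Ioo_eq_two_mul_of_ae_symm {f : ℝ → ℝ} (hf : IntegrableOn f (Ioo 0 1))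
    (hsymm : ∀ᵐ x ∂volume.restrict (Ioo (0 : ℝ) 1), f (1 - x) = f x) :
    ∫ x in Ioo (0 : ℝ) 1, f x = 2 * ∫ x in Ioo (0 : ℝ) (1 / 2), f x := by
  have hi : IntervalIntegrable f volume 0 1 :=
    (intervalIntegrable_iff_integrableOn_Ioo_of_le zero_le_one).2 hf
  have hl : IntervalIntegrable f volume 0 (1 / 2) :=
    hi.mono_set (uIcc_subset_uIcc_left (by rw [uIcc_of_le] <;> norm_num))
  have hr : IntervalIntegrable f volume (1 / 2) 1 :=
    hi.mono_set (uIcc_subset_uIcc_right (by rw [uIcc_of_le] <;> norm_num))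
  have hreflect : ∫ x in (1 / 2 : ℝ)..1, f x = ∫ x in (0 : ℝ)..(1 / 2), f x := by
    have h := intervalIntegral.integral_comp_sub_left (a := 0) (b := 1 / 2) f 1
    rw [sub_zero, sub_half] at h
    rw [← h]
    refine intervalIntegral.integral_congr_ae ?_
    filter_upwards [ae_imp_of_ae_restrict hsymm] with x hx hmem
    rw [uIoc_of_le (by norm_num)] at hmem
    exact hx ⟨hmem.1, by linarith [hmem.2]⟩
  rw [← integral_Ioc_eq_integral_Ioo, ← integral_Ioc_eq_integral_Ioo,
    ← intervalIntegral.integral_of_le zero_le_one,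
    ← intervalIntegral.integral_of_le (by norm_num),
    ← intervalIntegral.integral_add_adjacent_intervals hl hr, hreflect, two_mul]

end AESawSum

section Comparison

open Real Set
open scoped Nat

lemma pow_le_factorial_mul_exp {μ t : ℝ} (hμ : 0 < μ) (ht : 0 ≤ t) (n : ℕ) :
    t ^ n ≤ n ! / μ ^ n * exp (μ * t) := by
  have h := pow_div_factorial_le_exp (μ * t) (by positivity) n
  rw [mul_pow, div_le_iff₀ (by positivity)] at h
  rw [div_mul_eq_mul_div, le_div_iff₀ (by positivity)]
  linarith

lemma abs_pow_sub_pow_le_factorial {a b u μ : ℝ} (hμ : 0 < μ) (ha : 0 ≤ a) (hu : 0 ≤ u)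
    (hub : |u - a| ≤ b) (K : ℕ) :
    |u ^ K - a ^ K| ≤ K ! / μ ^ K * (μ * (b * exp (μ * (a + b)))) := by
  have hb : 0 ≤ b := (abs_nonneg _).trans hub
  cases K with
  | zero =>
    simp only [pow_zero, sub_self, abs_zero]
    positivity
  | succ n =>
    have hmax : max |u| |a| ≤ a + b := by
      rw [abs_of_nonneg hu, abs_of_nonneg ha]
      exact max_le (by linarith [(abs_le.1 hub).2]) (by linarith)
    calc |u ^ (n + 1) - a ^ (n + 1)|
        ≤ |u - a| * (n + 1 : ℕ) * max |u| |a| ^ n := abs_pow_sub_pow_le u a (n + 1)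
      _ ≤ b * (n + 1 : ℕ) * (n ! / μ ^ n * exp (μ * (a + b))) := by
          gcongr
          exact (pow_le_pow_left₀ (le_max_of_le_left (abs_nonneg u)) hmax n).trans
            (pow_le_factorial_mul_exp hμ (by linarith) n)
      _ = _ := by
          rw [Nat.factorial_succ, pow_succ]
          push_cast
          field_simp

lemma abs_log_add_le (A : ℝ) {x : ℝ} (h0 : 0 ≤ x) (h1 : x ≤ 1) : |log x + A| ≤ -log x + |A| := by
  simpa only [abs_of_nonpos (log_nonpos h0 h1)] using abs_add_le (log x) A

lemma mul_exp_abs_log_add_le {x V A μ s : ℝ} (h0 : 0 < x) (h1 : x ≤ 1 / 2) (hV : 0 ≤ V)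
    (hμ : 0 ≤ μ) (hs : μ / 2 < s) (hμs : μ ≤ s + 1) :
    x * V * exp (μ * (|log x + A| + x * V)) ≤
      (s - μ / 2)⁻¹ * exp (μ * |A|) * (x ^ (-s) * exp (s * V)) := by
  have hlog := log_nonpos h0.le (by linarith)
  have hε : 0 < s - μ / 2 := by linarith
  have hVexp : V ≤ (s - μ / 2)⁻¹ * exp ((s - μ / 2) * V) := by
    rw [inv_mul_eq_div, le_div_iff₀ hε]
    linarith [add_one_le_exp ((s - μ / 2) * V)]
  have hxV : x * V ≤ 1 / 2 * V := by gcongr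
  calc x * V * exp (μ * (|log x + A| + x * V))
      ≤ exp (log x) * ((s - μ / 2)⁻¹ * exp ((s - μ / 2) * V)) *
        exp (μ * (-log x + |A| + 1 / 2 * V)) := by
        rw [exp_log h0]
        gcongr
        exact abs_log_add_le A h0.le (by linarith)
    _ = (s - μ / 2)⁻¹ * exp (μ * |A|) * (exp ((1 - μ) * log x) * exp (s * V)) := by
        rw [mul_assoc, mul_left_comm (exp _), mul_assoc, mul_left_comm (exp _), mul_assoc]
        simp only [← exp_add]
        ring_nf
    _ ≤ (s - μ / 2)⁻¹ * exp (μ * |A|) * (x ^ (-s) * exp (s * V)) := by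
        rw [rpow_def_of_pos h0]
        gcongr ?_ * (exp ?_ * ?_)
        nlinarith

end Comparison

section LogIntegral

open Real Set
open scoped Nat

lemma image_exp_neg_Ioi_zero : (fun t : ℝ => exp (-t)) '' Ioi 0 = Ioo 0 1 := by
  ext x
  simp only [mem_image, mem_Ioi, mem_Ioo]
  constructor
  · rintro ⟨t, ht, rfl⟩
    exact ⟨exp_pos _, exp_lt_one_iff.2 (neg_neg_of_pos ht)⟩
  · rintro ⟨h0, h1⟩
    exact ⟨-log x, neg_pos.2 (log_neg h0 h1), by rw [neg_neg, exp_log h0]⟩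

lemma hasDerivWithinAt_exp_neg (S : Set ℝ) (t : ℝ) :
    HasDerivWithinAt (fun t : ℝ => exp (-t)) (exp (-t) * -1) S t :=
  (hasDerivAt_neg t).exp.hasDerivWithinAt

lemma abs_deriv_exp_neg_smul_abs_log_pow (K : ℕ) {t : ℝ} (ht : 0 < t) :
    |exp (-t) * -1| • |log (exp (-t))| ^ K = exp (-t) * t ^ ((K + 1 : ℝ) - 1) := by
  rw [log_exp, abs_neg, abs_of_pos ht, mul_neg_one, abs_neg, abs_exp, smul_eq_mul,
    add_sub_cancel_right, rpow_natCast]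

lemma integrableOn_abs_log_pow (K : ℕ) : IntegrableOn (fun x => |log x| ^ K) (Ioo 0 1) := by
  rw [← image_exp_neg_Ioi_zero, integrableOn_image_iff_integrableOn_abs_deriv_smul
    measurableSet_Ioi (fun t _ => hasDerivWithinAt_exp_neg _ t) fun s _ t _ h => by simpa using h]
  exact (GammaIntegral_convergent (by positivity)).congr_fun
    (fun t ht => (abs_deriv_exp_neg_smul_abs_log_pow K ht).symm) measurableSet_Ioi

lemma integral_abs_log_pow (K : ℕ) : ∫ x in Ioo 0 1, |log x| ^ K = K ! := by
  rw [← image_exp_neg_Ioi_zero, integral_image_eq_integral_abs_deriv_smul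
    measurableSet_Ioi (fun t _ => hasDerivWithinAt_exp_neg _ t) fun s _ t _ h => by simpa using h,
    ← Gamma_nat_eq_factorial, Gamma_eq_integral (by positivity)]
  exact setIntegral_congr_fun measurableSet_Ioi fun t ht => abs_deriv_exp_neg_smul_abs_log_pow K ht

lemma intervalIntegrable_abs_log_pow_one {b : ℝ} (hb : 0 < b) (K : ℕ) :
    IntervalIntegrable (fun x => |log x| ^ K) volume 1 b := by
  refine ContinuousOn.intervalIntegrable (ContinuousOn.pow (ContinuousOn.abs
    (continuousOn_log.mono fun x hx => ?_)) K)
  exact ((lt_min one_pos hb).trans_le hx.1).ne'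

lemma intervalIntegrable_abs_log_pow_zero {b : ℝ} (hb : 0 < b) (K : ℕ) :
    IntervalIntegrable (fun x => |log x| ^ K) volume 0 b :=
  ((intervalIntegrable_iff_integrableOn_Ioo_of_le zero_le_one).2
    (integrableOn_abs_log_pow K)).trans (intervalIntegrable_abs_log_pow_one hb K)

lemma abs_log_le_of_mem_uIcc_one {b x : ℝ} (hb : 0 < b) (hx : x ∈ uIcc 1 b) :
    |log x| ≤ |log b| := by
  have hmono : MonotoneOn log (uIcc 1 b) := fun y hy z _ hyz =>
    log_le_log ((lt_min one_pos hb).trans_le hy.1) hyz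
  simpa using abs_sub_left_of_mem_uIcc (hmono.mapsTo_uIcc hx)

lemma abs_integral_abs_log_pow_sub_factorial_le {b : ℝ} (hb : 0 < b) (K : ℕ) :
    |(∫ x in 0..b, |log x| ^ K) - K !| ≤ |log b| ^ K * |b - 1| := by
  have hone : ∫ x in 0..1, |log x| ^ K = K ! := by
    rw [intervalIntegral.integral_of_le zero_le_one, integral_Ioc_eq_integral_Ioo,
      integral_abs_log_pow]
  rw [← intervalIntegral.integral_add_adjacent_intervals
    (intervalIntegrable_abs_log_pow_zero one_pos K) (intervalIntegrable_abs_log_pow_one hb K),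
    hone, add_sub_cancel_left]
  have hbound : ∀ x ∈ uIoc 1 b, ‖|log x| ^ K‖ ≤ |log b| ^ K := fun x hx => by
    rw [norm_pow, norm_eq_abs, abs_abs]
    exact pow_le_pow_left₀ (abs_nonneg _)
      (abs_log_le_of_mem_uIcc_one hb (uIoc_subset_uIcc hx)) K
  exact intervalIntegral.norm_integral_le_of_norm_le_const hbound

lemma log_exp_mul (A : ℝ) {x : ℝ} (hx : 0 < x) : log (exp A * x) = log x + A := by
  rw [log_mul (exp_ne_zero A) hx.ne', log_exp, add_comm]

lemma integrableOn_abs_log_add_pow (A : ℝ) {r : ℝ} (hr : 0 < r) (K : ℕ) :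
    IntegrableOn (fun x => |log x + A| ^ K) (Ioo 0 r) := by
  have h := (intervalIntegrable_abs_log_pow_zero (by positivity) K).comp_mul_left
    (c := exp A) (a := 0) (b := exp A * r)
  rw [zero_div, mul_div_cancel_left₀ _ (exp_ne_zero A),
    intervalIntegrable_iff_integrableOn_Ioo_of_le hr.le] at h
  exact h.congr_fun (fun x hx => by simp only [log_exp_mul A hx.1]) measurableSet_Ioo

lemma integral_abs_log_add_pow (A : ℝ) {r : ℝ} (hr : 0 ≤ r) (K : ℕ) :
    ∫ x in Ioo 0 r, |log x + A| ^ K = exp (-A) * ∫ x in 0..exp A * r, |log x| ^ K := by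
  calc ∫ x in Ioo 0 r, |log x + A| ^ K = ∫ x in Ioo 0 r, |log (exp A * x)| ^ K :=
        setIntegral_congr_fun measurableSet_Ioo fun x hx => by simp only [log_exp_mul A hx.1]
    _ = ∫ x in 0..r, |log (exp A * x)| ^ K := by
        rw [intervalIntegral.integral_of_le hr, integral_Ioc_eq_integral_Ioo]
    _ = exp (-A) * ∫ x in 0..exp A * r, |log x| ^ K := by
        rw [intervalIntegral.integral_comp_mul_left (fun x => |log x| ^ K) (exp_ne_zero A),
          mul_zero, exp_neg, smul_eq_mul]

lemma exists_abs_integral_abs_log_add_pow_sub_le (A : ℝ) {r μ : ℝ} (hr : 0 < r) (hμ : 0 < μ) :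
    ∃ D : ℝ, ∀ K : ℕ, |(∫ x in Ioo 0 r, |log x + A| ^ K) - exp (-A) * K !| ≤ K ! / μ ^ K * D := by
  refine ⟨exp (-A) * (exp (μ * |log (exp A * r)|) * |exp A * r - 1|), fun K => ?_⟩
  rw [integral_abs_log_add_pow A hr.le, ← mul_sub, abs_mul, abs_exp]
  calc _ ≤ exp (-A) * (|log (exp A * r)| ^ K * |exp A * r - 1|) := by
        gcongr
        exact abs_integral_abs_log_pow_sub_factorial_le (by positivity) K
    _ ≤ exp (-A) * (K ! / μ ^ K * exp (μ * |log (exp A * r)|) * |exp A * r - 1|) := by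
        gcongr
        exact pow_le_factorial_mul_exp hμ (abs_nonneg _) K
    _ = _ := by ring

end LogIntegral

namespace HasAESawSum

open Real Set
open scoped Nat

variable {g : ℝ → ℝ}

lemma integrableOn_abs_pow (hg : HasAESawSum g) (K : ℕ) :
    IntegrableOn (fun x => |g x| ^ K) (Ioo 0 1) := by
  have hm := hg.aemeasurable
  have hexp := hg.integrableOn_exp_abs (s := 1 / 2) (by norm_num) (by norm_num)
  refine Integrable.mono' (hexp.const_mul (K ! / (1 / 2) ^ K))
    (AEMeasurable.aestronglyMeasurable (by fun_prop)) (.of_forall fun x => ?_)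
  rw [norm_of_nonneg (by positivity)]
  exact pow_le_factorial_mul_exp (by norm_num) (abs_nonneg _) K

lemma integral_abs_pow_eq_two_mul (hg : HasAESawSum g) (K : ℕ) :
    ∫ x in Ioo (0 : ℝ) 1, |g x| ^ K = 2 * ∫ x in Ioo (0 : ℝ) (1 / 2), |g x| ^ K :=
  integral_Ioo_eq_two_mul_of_ae_symm (hg.integrableOn_abs_pow K)
    (hg.ae_one_sub_eq_neg.mono fun x hx => by simp only [hx, abs_neg])

lemma exists_ae_abs_abs_pow_sub_le (hg : HasAESawSum g) {μ s : ℝ} (hμ : 0 < μ) (hs : μ / 2 < s)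
    (hμs : μ ≤ s + 1) :
    ∃ c : ℝ, ∀ K : ℕ, ∀ᵐ x ∂volume.restrict (Ioo (0 : ℝ) (1 / 2)),
      ‖|g x| ^ K - |log x + Aconst| ^ K‖ ≤
        K ! / μ ^ K * (c * (x ^ (-s) * exp (s * |g (gaussMap x)|))) := by
  have hsub : Ioo (0 : ℝ) (1 / 2) ⊆ Ioo 0 1 := Ioo_subset_Ioo_right (by norm_num)
  refine ⟨μ * ((s - μ / 2)⁻¹ * exp (μ * |Aconst|) * exp (s * 14)), fun K => ?_⟩
  filter_upwards [ae_restrict_of_ae_restrict_of_subset hsub hg.ae_abs_add_log_add_le,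
    ae_restrict_mem measurableSet_Ioo] with x hx ⟨h0, h1⟩
  have hclose : |(|g x| - |log x + Aconst|)| ≤ x * (14 + |g (gaussMap x)|) := by
    rw [← sub_neg_eq_add (g x)] at hx
    simpa only [abs_neg] using (abs_abs_sub_abs_le _ _).trans hx
  refine (abs_pow_sub_pow_le_factorial hμ (abs_nonneg _) (abs_nonneg _) hclose K).trans ?_
  rw [mul_assoc μ]
  refine mul_le_mul_of_nonneg_left (mul_le_mul_of_nonneg_left ?_ hμ.le) (by positivity)
  refine (mul_exp_abs_log_add_le h0 h1.le (by positivity) hμ.le hs hμs).trans_eq ?_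
  rw [mul_add s, exp_add]
  ring

lemma exists_abs_integral_half_sub_le (hg : HasAESawSum g) {μ : ℝ} (hμ : 0 < μ) (hμ2 : μ < 2) :
    ∃ D : ℝ, ∀ K : ℕ, |(∫ x in Ioo (0 : ℝ) (1 / 2), |g x| ^ K) -
      ∫ x in Ioo (0 : ℝ) (1 / 2), |log x + Aconst| ^ K| ≤ K ! / μ ^ K * D := by
  have hsub : Ioo (0 : ℝ) (1 / 2) ⊆ Ioo 0 1 := Ioo_subset_Ioo_right (by norm_num)
  obtain ⟨s, hs, hs1⟩ := exists_between (show μ / 2 < 1 by linarith)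
  obtain ⟨c, hc⟩ := hg.exists_ae_abs_abs_pow_sub_le hμ hs (by linarith)
  have hw : IntegrableOn (fun x => c * (x ^ (-s) * exp (s * |g (gaussMap x)|)))
      (Ioo 0 (1 / 2)) :=
    ((hg.integrableOn_rpow_mul_exp_abs_gaussMap (by linarith) hs1).mono_set hsub).const_mul c
  refine ⟨∫ x in Ioo 0 (1 / 2), c * (x ^ (-s) * exp (s * |g (gaussMap x)|)), fun K => ?_⟩
  rw [← integral_sub ((hg.integrableOn_abs_pow K).mono_set hsub)
    (integrableOn_abs_log_add_pow _ one_half_pos K), ← integral_const_mul]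
  exact norm_integral_le_of_norm_le (hw.const_mul _) (hc K)

lemma exists_abs_integral_abs_pow_sub_le (hg : HasAESawSum g) {μ : ℝ} (hμ : 0 < μ)
    (hμ2 : μ < 2) : ∃ D > 0, ∀ K : ℕ,
      |(∫ x in Ioo (0 : ℝ) 1, |g x| ^ K) - 2 * exp (-Aconst) * K !| ≤ K ! / μ ^ K * D := by
  obtain ⟨D₁, h₁⟩ := hg.exists_abs_integral_half_sub_le hμ hμ2
  obtain ⟨D₂, h₂⟩ := exists_abs_integral_abs_log_add_pow_sub_le Aconst one_half_pos hμ
  refine ⟨2 * (|D₁| + |D₂| + 1), by positivity, fun K => ?_⟩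
  rw [hg.integral_abs_pow_eq_two_mul, mul_assoc, ← mul_sub, abs_mul, abs_two, mul_left_comm]
  refine mul_le_mul_of_nonneg_left ?_ zero_le_two
  calc _ ≤ K ! / μ ^ K * D₁ + K ! / μ ^ K * D₂ :=
        (abs_sub_le _ _ _).trans (add_le_add (h₁ K) (h₂ K))
    _ ≤ K ! / μ ^ K * (|D₁| + |D₂| + 1) := by
        rw [← mul_add]
        refine mul_le_mul_of_nonneg_left ?_ (by positivity)
        linarith [le_abs_self D₁, le_abs_self D₂]

end HasAESawSum

/-- Main theorem: if `g` is (a.e. on `(0,1)`) the sum of `Σ_{l≥1}(1-2{lx})/l`, then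
there is an absolute constant `C > 0` with
`∫_0^1 |g|^K dx = 2 e^{-A} Γ(K+1)(1 + O(exp(-CK)))` as `K → ∞`. -/
theorem integral_abs_g_pow_asymptotic (g : ℝ → ℝ)
    (hg : ∀ᵐ x ∂(volume.restrict (Set.Ioo (0:ℝ) 1)),
      Tendsto (fun N => ∑ l ∈ Finset.range N,
          (1 - 2 * Int.fract (((l : ℝ) + 1) * x)) / ((l : ℝ) + 1))
        atTop (nhds (g x))) :
    ∃ C > (0:ℝ), ∃ c > (0:ℝ), ∀ K : ℕ,
      |(∫ x in Set.Ioo (0:ℝ) 1, |g x| ^ K) -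
          2 * Real.exp (-Aconst) * Real.Gamma (K + 1)| ≤
        2 * Real.exp (-Aconst) * Real.Gamma (K + 1) * (c * Real.exp (-C * K)) := by
  have hsum : HasAESawSum g := hg
  obtain ⟨D, hD, hbound⟩ :=
    hsum.exists_abs_integral_abs_pow_sub_le (μ := 3 / 2) (by norm_num) (by norm_num)
  refine ⟨Real.log (3 / 2), Real.log_pos (by norm_num), Real.exp Aconst * D / 2, by positivity,
    fun K => ?_⟩
  have hexp : Real.exp (-Real.log (3 / 2) * K) = ((3 / 2) ^ K)⁻¹ := by
    rw [neg_mul, Real.exp_neg, mul_comm, Real.exp_nat_mul, Real.exp_log (by norm_num)]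
  rw [Real.Gamma_nat_eq_factorial, hexp]
  refine (hbound K).trans_eq ?_
  rw [Real.exp_neg]
  field_simp
end
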